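/- As m → ∞ over integers m such that p = 2m+1 is a prime, the proportion of isomorphism classes of (unlabelled) trees with m+1 edges that decompose K_{6m+5} \ e (the complete graph on 6m+5 vertices minus one edge) tends to 1. -/

import Mathlib

/-- `H` decomposes `G`: `G` is the edge-disjoint union of isomorphic copies of `H`,
each copy being given by an injective homomorphism of `H` into `G`, and every edge of `G`
lying in exactly one copy. -/
def Decomposes {α β : Type} (H : SimpleGraph α) (G : SimpleGraph β) : Prop :=
  ∃ (ι : Type) (f : ι → α → β),
    (∀ i, Function.Injective (f i)) ∧
    (∀ i a b, H.Adj a b → G.Adj (f i a) (f i b)) ∧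
    (∀ e ∈ G.edgeSet, ∃! q : ι × Sym2 α, q.2 ∈ H.edgeSet ∧ Sym2.map (f q.1) q.2 = e)

/-- Trees with `m` edges, on the labelled vertex set `Fin (m+1)`. -/
def TreeOn (m : ℕ) : Type := {T : SimpleGraph (Fin (m + 1)) // T.IsTree}

/-- Two labelled trees are equivalent iff they are isomorphic as graphs. -/
def treeSetoid (m : ℕ) : Setoid (TreeOn m) where
  r T₁ T₂ := Nonempty (T₁.val ≃g T₂.val)
  iseqv := ⟨fun _ => ⟨SimpleGraph.Iso.refl⟩,
    fun ⟨e⟩ => ⟨e.symm⟩, fun ⟨e⟩ ⟨e'⟩ => ⟨e.trans e'⟩⟩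

/-- The isomorphism classes of (unlabelled) trees with `m` edges. -/
def UnlabelledTree (m : ℕ) : Type := Quotient (treeSetoid m)

/-! A tree with at least a third of its vertices leaves, `m + 2` vertices and `p = 2m + 1` prime
decomposes the graph. Its non-leaves go greedily into `ZMod p`, injectively and with distinct edge
lengths up to sign; Alon's theorem on transversals of fewer than `p` terms then places all leaves
but one so that each of the lengths `1, …, m` occurs exactly once. Since leaves collide only with
non-leaves, the image is sparse enough to be 4-coloured. Assigning to the four colours the four
pairwise independent linear forms on the plane over the field with three elements, and moving the
image by `ZMod p` and the plane, gives `9 p` copies in `ZMod p × ZMod 3` together with two further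
vertices, which the pendant edge of the missing leaf reaches. The copies cover all edges, and there
are just enough of them, so no edge is covered twice.

Almost all trees have that many leaves. Matula's bijection between rooted trees and natural numbers
through prime factorisation makes the functional equation of the generating function of rooted trees
an Euler product. Evaluating it with a second variable marking leaves bounds the number of trees
with few leaves on `n` vertices by `(1250 / 429) ^ n`, and a point of divergence shows that there
are at least a constant times `(147 / 50) ^ n` rooted trees, where `1250 / 429 < 147 / 50`. -/

/-! ### Additive Latin transversals -/

section AdditiveTransversals

open Equiv Matrix Polynomial

variable {R : Type*} [CommRing R] {n : ℕ}

theorem sum_sign_mul_prod_add_pow (a d : Fin n → R) (σ : Perm (Fin n)) :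
    ∑ π : Perm (Fin n), ((Perm.sign π : ℤ) : R) *
        (((Perm.sign σ : ℤ) : R) * ∏ i, (a (σ i) + d (π (σ i))) ^ (i : ℕ))
      = (vandermonde d).det := by
  nontriviality R
  rw [det_eval_matrixOfPolynomials_eq_det_vandermonde d
    (fun i => (X + C (a (σ i))) ^ (i : ℕ))
    (fun i => by rw [(monic_X_add_C _).natDegree_pow, natDegree_X_add_C, mul_one])
    (fun i => (monic_X_add_C _).pow _), det_apply']
  refine Fintype.sum_equiv (Equiv.mulRight σ) _ _ fun π => ?_
  simp only [Equiv.coe_mulRight, Perm.sign_mul, of_apply, eval_pow, eval_add, eval_X, eval_C,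
    Perm.coe_mul, Function.comp_apply, Units.val_mul, Int.cast_mul, mul_assoc, add_comm]

theorem sum_sign_mul_det_vandermonde_add (a d : Fin n → R) :
    ∑ π : Perm (Fin n), ((Perm.sign π : ℤ) : R) * (vandermonde fun i => a i + d (π i)).det
      = n.factorial * (vandermonde d).det := by
  simp_rw [fun π : Perm (Fin n) => det_apply' (vandermonde fun i => a i + d (π i)),
    vandermonde_apply, Finset.mul_sum]
  rw [Finset.sum_comm]
  simp only [sum_sign_mul_prod_add_pow, Finset.sum_const, Finset.card_univ, Fintype.card_perm,
    Fintype.card_fin, nsmul_eq_mul]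

variable [IsDomain R]

theorem exists_perm_injective_add (a d : Fin n → R) (hd : d.Injective)
    (hn : (n.factorial : R) ≠ 0) :
    ∃ π : Perm (Fin n), Function.Injective fun i => a i + d (π i) := by
  by_contra! h
  have hzero : ∀ π : Perm (Fin n), (vandermonde fun i => a i + d (π i)).det = 0 :=
    fun π => not_not.mp (mt det_vandermonde_ne_zero_iff.mp (h π))
  refine mul_ne_zero hn (det_vandermonde_ne_zero_iff.mpr hd) ?_
  simp only [← sum_sign_mul_det_vandermonde_add a, hzero, mul_zero, Finset.sum_const_zero]

theorem exists_equiv_injective_add {ι κ : Type*} [Fintype ι] [Fintype κ] (a : ι → R) (d : κ → R)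
    (hd : d.Injective) (hcard : Fintype.card ι = Fintype.card κ)
    (hι : ((Fintype.card ι).factorial : R) ≠ 0) :
    ∃ e : ι ≃ κ, Function.Injective fun i => a i + d (e i) := by
  let eι := Fintype.equivFin ι
  let eκ := (Fintype.equivFinOfCardEq hcard.symm).symm
  obtain ⟨π, hπ⟩ := exists_perm_injective_add (a ∘ eι.symm) (d ∘ eκ) (hd.comp eκ.injective) hι
  refine ⟨(eι.trans π).trans eκ, ?_⟩
  simpa [Function.comp_def] using hπ.comp eι.injective

theorem exists_injOn_bijOn_sub {α : Type*} (a : α → R) {s : Finset α} {D : Finset R}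
    (hcard : s.card = D.card) (hs : (s.card.factorial : R) ≠ 0) :
    ∃ ψ : α → R, Set.InjOn ψ s ∧ Set.BijOn (fun i => ψ i - a i) s D := by
  classical
  obtain ⟨e, he⟩ := exists_equiv_injective_add (fun i : s => a i) ((↑) : D → R)
    Subtype.val_injective (by simpa using hcard) (by simpa using hs)
  let ψ : α → R := fun i => if h : i ∈ s then a i + e ⟨i, h⟩ else 0
  have hψ : ∀ i : s, ψ i = a i + e i := fun i => by simp [ψ]
  refine ⟨ψ, fun i hi j hj hij => ?_, fun i hi => ?_, fun i hi j hj hij => ?_, fun x hx => ?_⟩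
  · exact congrArg Subtype.val (@he ⟨i, hi⟩ ⟨j, hj⟩
      (((hψ ⟨i, hi⟩).symm.trans hij).trans (hψ ⟨j, hj⟩)))
  · simp [hψ ⟨i, hi⟩]
  · simpa [hψ ⟨i, hi⟩, hψ ⟨j, hj⟩] using hij
  · exact ⟨e.symm ⟨x, hx⟩, (e.symm ⟨x, hx⟩).2, by simp [hψ]⟩

end AdditiveTransversals

/-! ### Rooted trees -/

/-- A rooted tree on the vertex type `V`, presented by the map sending each vertex to its parent;
the root is its own parent. -/
structure ParentTree (V : Type*) where
  root : V
  par : V → V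
  par_root : par root = root
  exists_iterate_par_eq_root : ∀ v, ∃ k, par^[k] v = root

namespace ParentTree

variable {V : Type*} (P : ParentTree V) {u v : V}

@[elab_as_elim]
theorem induction_par {motive : V → Prop} (root : motive P.root)
    (step : ∀ v, v ≠ P.root → motive (P.par v) → motive v) (v : V) : motive v := by
  obtain ⟨k, hk⟩ := P.exists_iterate_par_eq_root v
  induction k generalizing v with
  | zero => exact (show v = P.root from hk) ▸ root
  | succ k ih =>
    by_cases hv : v = P.root
    · exact hv ▸ root
    · exact step v hv (ih (P.par v) hk)

/-- The number of steps from a vertex to the root. -/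
noncomputable def depth (v : V) : ℕ := sInf {k | P.par^[k] v = P.root}

variable {P}

theorem depth_par_lt (hv : v ≠ P.root) : P.depth (P.par v) < P.depth v := by
  have hmem : P.par^[P.depth v] v = P.root := Nat.sInf_mem (P.exists_iterate_par_eq_root v)
  obtain ⟨k, hk⟩ := Nat.exists_eq_succ_of_ne_zero fun h0 : P.depth v = 0 => hv (by rwa [h0] at hmem)
  rw [hk] at hmem ⊢
  exact Nat.lt_succ_of_le (Nat.sInf_le hmem)

theorem par_ne (hv : v ≠ P.root) : P.par v ≠ v :=
  fun h => (congrArg P.depth h).not_lt (depth_par_lt hv)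

theorem par_par_ne (hv : v ≠ P.root) : P.par (P.par v) ≠ v := fun h => by
  by_cases hpv : P.par v = P.root
  · exact hv (by rw [← h, hpv, P.par_root])
  · have := depth_par_lt hpv
    rw [h] at this
    exact this.asymm (depth_par_lt hv)

theorem ne_root_of_par_ne (h : P.par v ≠ v) : v ≠ P.root := by
  rintro rfl
  exact h P.par_root

variable (P)

/-- The underlying graph of a rooted tree. -/
def graph : SimpleGraph V := .fromRel fun u v => P.par u = v

variable {P}

theorem graph_adj : P.graph.Adj u v ↔ u ≠ v ∧ (P.par u = v ∨ P.par v = u) := Iff.rfl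

theorem graph_adj_par (hv : v ≠ P.root) : P.graph.Adj v (P.par v) :=
  ⟨(par_ne hv).symm, .inl rfl⟩

theorem graph_connected : P.graph.Connected := by
  have hroot : ∀ v, P.graph.Reachable v P.root := fun v => by
    induction v using P.induction_par with
    | root => rfl
    | step v hv ih => exact (graph_adj_par hv).reachable.trans ih
  exact (SimpleGraph.connected_iff _).mpr
    ⟨fun u v => (hroot u).trans (hroot v).symm, ⟨P.root⟩⟩

theorem injOn_edge : Set.InjOn (fun v => s(v, P.par v)) {v | v ≠ P.root} := by
  intro u _ v hv h
  rcases Sym2.eq_iff.mp h with ⟨huv, -⟩ | ⟨hu, hv'⟩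
  · exact huv
  · exact absurd (by rw [← hu, hv']) (par_par_ne hv)

theorem edgeSet_graph : P.graph.edgeSet = (fun v => s(v, P.par v)) '' {v | v ≠ P.root} := by
  ext e
  induction e using Sym2.ind with | _ u v
  simp only [SimpleGraph.mem_edgeSet, graph_adj, Set.mem_image, Set.mem_ofPred_eq, Sym2.eq_iff]
  constructor
  · rintro ⟨hne, rfl | rfl⟩
    · exact ⟨u, ne_root_of_par_ne hne.symm, .inl ⟨rfl, rfl⟩⟩
    · exact ⟨v, ne_root_of_par_ne hne, .inr ⟨rfl, rfl⟩⟩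
  · rintro ⟨w, hw, ⟨rfl, rfl⟩ | ⟨rfl, rfl⟩⟩
    · exact ⟨(par_ne hw).symm, .inl rfl⟩
    · exact ⟨par_ne hw, .inr rfl⟩

theorem ncard_edgeSet_graph_add_one [Finite V] : P.graph.edgeSet.ncard + 1 = Nat.card V := by
  rw [edgeSet_graph, injOn_edge.ncard_image, ← Set.ncard_add_ncard_compl {v | v ≠ P.root}]
  simp [Set.compl_ofPred]

theorem graph_isTree [Finite V] : P.graph.IsTree :=
  SimpleGraph.isTree_iff_connected_and_card.mpr ⟨graph_connected, ncard_edgeSet_graph_add_one⟩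

theorem exists_adj_dist_lt {G : SimpleGraph V} (hG : G.Connected) (hne : u ≠ v) :
    ∃ w, G.Adj u w ∧ G.dist w v < G.dist u v := by
  obtain ⟨p, hp⟩ := hG.exists_walk_length_eq_dist u v
  cases p with
  | nil => exact absurd rfl hne
  | cons h q =>
    refine ⟨_, h, (SimpleGraph.dist_le q).trans_lt ?_⟩
    rw [← hp, SimpleGraph.Walk.length_cons]
    exact Nat.lt_succ_self _

theorem exists_root_eq_graph_eq {G : SimpleGraph V} (hG : G.IsTree) (r : V) :
    ∃ P : ParentTree V, P.root = r ∧ P.graph = G := by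
  classical
  choose! f hadj hdist using fun v (hv : v ≠ r) => exists_adj_dist_lt hG.connected hv
  have hreach : ∀ v, ∃ k, (Function.update f r r)^[k] v = r := fun v => by
    induction hn : G.dist v r using Nat.strong_induction_on generalizing v with
    | _ n ih =>
      by_cases hv : v = r
      · exact ⟨0, hv⟩
      · obtain ⟨k, hk⟩ := ih _ (hn ▸ hdist v hv) (f v) rfl
        exact ⟨k + 1, by rwa [Function.iterate_succ_apply, Function.update_of_ne hv]⟩
  let P : ParentTree V := ⟨r, Function.update f r r, Function.update_self .., hreach⟩
  have hpar : ∀ v, P.par v ≠ v → G.Adj v (P.par v) := fun v hv => by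
    have hvr : v ≠ r := ne_root_of_par_ne hv
    simpa [P, hvr] using hadj v hvr
  have hle : P.graph ≤ G := by
    rintro u v ⟨hne, rfl | rfl⟩
    · exact hpar u hne.symm
    · exact (hpar v hne).symm
  exact ⟨P, rfl, hle.antisymm
    ((SimpleGraph.isTree_iff_minimal_connected.mp hG).2 graph_connected hle)⟩

/-- The vertices of a rooted tree that have no child, other than the root. The root is excluded
because it is its own parent. -/
def leaves (P : ParentTree V) : Set V := (Set.range P.par)ᶜ

variable {W : Type*}

/-- Isomorphism of rooted trees. -/
def Isom (P : ParentTree V) (Q : ParentTree W) : Prop :=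
  ∃ e : V ≃ W, e P.root = Q.root ∧ ∀ v, e (P.par v) = Q.par (e v)

variable {Q : ParentTree W}

theorem Isom.graph_iso : P.Isom Q → Nonempty (P.graph ≃g Q.graph) := fun ⟨e, _, hpar⟩ =>
  ⟨⟨e, by intro u v; simp only [graph_adj, ← hpar, e.injective.eq_iff, ne_eq]⟩⟩

theorem isom_of_graph_iso (e : P.graph ≃g Q.graph) (hroot : e P.root = Q.root) : P.Isom Q := by
  refine ⟨e.toEquiv, hroot, fun v => ?_⟩
  change e (P.par v) = Q.par (e v)
  induction v using P.induction_par with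
  | root => rw [P.par_root, hroot, Q.par_root]
  | step v hv ih =>
    rcases (e.map_adj_iff.mpr (graph_adj_par hv)).2 with h | h
    · exact h.symm
    · exact absurd (e.injective (ih.trans h)) (par_par_ne hv)

theorem root_notMem_leaves : P.root ∉ P.leaves := fun h => h ⟨P.root, P.par_root⟩

theorem par_notMem_leaves (v : V) : P.par v ∉ P.leaves := fun h => h ⟨v, rfl⟩

end ParentTree

/-! ### Folding a tree onto a cyclic group -/

section Degeneracy

open Finset

variable {X : Type*} {k : ℕ}

theorem colorable_of_degenerate [Finite X] {G : SimpleGraph X} [DecidableRel G.Adj]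
    (hG : ∀ W : Finset X, W.Nonempty → ∃ x ∈ W, #{y ∈ W | G.Adj x y} < k) : G.Colorable k := by
  classical
  have := Fintype.ofFinite X
  suffices h : ∀ W : Finset X, ∃ c : X → ℕ, (∀ x ∈ W, c x < k) ∧
      ∀ x ∈ W, ∀ y ∈ W, G.Adj x y → c x ≠ c y by
    obtain ⟨c, hlt, hc⟩ := h univ
    exact ⟨.mk (fun x => ⟨c x, hlt x (mem_univ x)⟩) fun {x y} hxy he =>
      hc x (mem_univ x) y (mem_univ y) hxy (congrArg Fin.val he)⟩
  intro W
  induction W using Finset.strongInduction with | _ W ih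
  rcases W.eq_empty_or_nonempty with rfl | hW
  · exact ⟨0, by simp, by simp⟩
  obtain ⟨x, hxW, hx⟩ := hG W hW
  obtain ⟨c, hlt, hc⟩ := ih _ (erase_ssubset hxW)
  obtain ⟨i, hi, hfree⟩ : ∃ i ∈ range k, i ∉ image c {y ∈ W | G.Adj x y} :=
    exists_mem_notMem_of_card_lt_card (by simpa using card_image_le.trans_lt hx)
  have hnew : ∀ y ∈ W, G.Adj x y → i ≠ c y := fun y hyW hxy he =>
    hfree (mem_image.mpr ⟨y, mem_filter.mpr ⟨hyW, hxy⟩, he.symm⟩)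
  refine ⟨Function.update c x i, fun y hy => ?_, fun y hy z hz hyz => ?_⟩
  · rcases eq_or_ne y x with rfl | hyx
    · simpa using hi
    · simpa [hyx] using hlt y (mem_erase.mpr ⟨hyx, hy⟩)
  · rcases eq_or_ne y x with rfl | hyx
    · simpa [hyz.ne'] using hnew z hz hyz
    rcases eq_or_ne z x with rfl | hzx
    · simpa [hyz.ne] using (hnew y hy hyz.symm).symm
    · simpa [hyx, hzx] using hc y (mem_erase.mpr ⟨hyx, hy⟩) z (mem_erase.mpr ⟨hzx, hz⟩) hyz

variable {r : X → X → Prop} [DecidableRel r]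

theorem sum_card_fromRel_le (W : Finset X) [DecidableRel (SimpleGraph.fromRel r).Adj] :
    ∑ x ∈ W, #{y ∈ W | (SimpleGraph.fromRel r).Adj x y} ≤ 2 * #(Rel.interedges r W W) := by
  classical
  have hout : ∑ x ∈ W, #{y ∈ W | r x y} = #(Rel.interedges r W W) := by
    simp only [Rel.interedges, card_filter, sum_product]
  have hin : ∑ x ∈ W, #{y ∈ W | r y x} = #(Rel.interedges r W W) := by
    rw [← hout]
    exact (sum_card_bipartiteAbove_eq_sum_card_bipartiteBelow r).symm
  rw [two_mul]
  nth_rw 1 [← hout]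
  rw [← hin, ← sum_add_distrib]
  refine sum_le_sum fun x _ => (card_le_card fun y hy => ?_).trans (card_union_le _ _)
  simp only [mem_filter, mem_union, SimpleGraph.fromRel_adj] at hy ⊢
  exact hy.2.2.imp (⟨hy.1, ·⟩) (⟨hy.1, ·⟩)

theorem colorable_fromRel_of_card_interedges_lt [Finite X]
    (hr : ∀ W : Finset X, W.Nonempty → #(Rel.interedges r W W) < k * #W) :
    (SimpleGraph.fromRel r).Colorable (2 * k) := by
  classical
  refine colorable_of_degenerate fun W hW => exists_lt_of_sum_lt ?_
  rw [sum_const, smul_eq_mul]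
  have := hr W hW
  exact (sum_card_fromRel_le W).trans_lt (by linarith)

end Degeneracy

namespace ParentTree

open Finset

variable {V X : Type*} {P : ParentTree V} {x₀ : V} {φ : V → X}

theorem card_filter_mem_le_two_mul [Fintype V] [DecidableEq V] [DecidableEq X]
    (hleaves : Set.InjOn φ (P.leaves \ {x₀})) (hinner : Set.InjOn φ P.leavesᶜ) (W : Finset X) :
    #{u | u ≠ x₀ ∧ φ u ∈ W} ≤ 2 * #W := by
  classical
  rw [← card_filter_add_card_filter_not (· ∈ P.leaves), two_mul]
  refine add_le_add (card_le_card_of_injOn φ (fun u hu => ?_) (hleaves.mono fun u hu => ?_))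
    (card_le_card_of_injOn φ (fun u hu => ?_) (hinner.mono fun u hu => ?_)) <;>
  simp_all

/-- The vertex of minimal depth over a set of classes has no edge to its parent there. -/
theorem card_filter_par_mem_lt_two_mul [Fintype V] [DecidableEq V] [DecidableEq X]
    (hx₀ : x₀ ∈ P.leaves)
    (hleaves : Set.InjOn φ (P.leaves \ {x₀})) (hinner : Set.InjOn φ P.leavesᶜ)
    {W : Finset X} (hW : W.Nonempty) :
    #{u | (u ≠ x₀ ∧ φ u ∈ W) ∧ u ≠ P.root ∧ φ (P.par u) ∈ W} < 2 * #W := by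
  set F : Finset V := {u | u ≠ x₀ ∧ φ u ∈ W} with hF
  have hcard : #F ≤ 2 * #W := card_filter_mem_le_two_mul hleaves hinner W
  rw [← filter_filter, ← hF]
  rcases F.eq_empty_or_nonempty with hempty | hne
  · simpa [hempty] using hW
  obtain ⟨u, huF, hmin⟩ := F.exists_min_image P.depth hne
  refine (card_lt_card (filter_ssubset.mpr ⟨u, huF, fun ⟨hur, hpar⟩ => ?_⟩)).trans_le hcard
  refine (hmin (P.par u) ?_).not_gt (depth_par_lt hur)
  exact mem_filter.mpr ⟨mem_univ _, fun h => par_notMem_leaves u (h ▸ hx₀), hpar⟩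

theorem exists_coloring_fin_four [Finite V] [Finite X] (hx₀ : x₀ ∈ P.leaves)
    (hleaves : Set.InjOn φ (P.leaves \ {x₀})) (hinner : Set.InjOn φ P.leavesᶜ) :
    ∃ c : X → Fin 4, ∀ u, u ≠ x₀ → u ≠ P.root → φ u ≠ φ (P.par u) → c (φ u) ≠ c (φ (P.par u)) := by
  classical
  have := Fintype.ofFinite V
  let r : X → X → Prop := fun x y => ∃ u, u ≠ x₀ ∧ u ≠ P.root ∧ φ u = x ∧ φ (P.par u) = y
  obtain ⟨c⟩ : (SimpleGraph.fromRel r).Colorable (2 * 2) := by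
    refine colorable_fromRel_of_card_interedges_lt fun W hW =>
      (card_le_card_of_surjOn (fun u => (φ u, φ (P.par u))) ?_).trans_lt
        (card_filter_par_mem_lt_two_mul hx₀ hleaves hinner hW)
    intro e he
    obtain ⟨hu, hpar, u, hu₀, hur, hfst, hsnd⟩ := Rel.mem_interedges_iff.mp he
    refine ⟨u, ?_, Prod.ext hfst hsnd⟩
    simp_all
  exact ⟨c, fun u hu₀ hur hne => c.valid ⟨hne, .inl ⟨u, hu₀, hur, rfl, rfl⟩⟩⟩

end ParentTree

/-- The length of a residue: its distance to `0` around the cycle of residues modulo `n`. -/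
def residueLength {n : ℕ} (x : ZMod n) : ℕ := x.valMinAbs.natAbs

section ResidueLength

variable {n : ℕ}

theorem residueLength_eq_iff {x y : ZMod n} :
    residueLength x = residueLength y ↔ x = y ∨ x = -y :=
  ZMod.natAbs_valMinAbs_eq_natAbs_valMinAbs

theorem residueLength_eq_zero {x : ZMod n} : residueLength x = 0 ↔ x = 0 := by
  rw [residueLength, Int.natAbs_eq_zero, ZMod.valMinAbs_eq_zero]

theorem residueLength_natCast {k : ℕ} (hk : k ≤ n / 2) : residueLength (k : ZMod n) = k := by
  rw [residueLength, ZMod.valMinAbs_natCast_of_le_half hk, Int.natAbs_natCast]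

theorem leftInvOn_residueLength_natCast :
    Set.LeftInvOn residueLength (Nat.cast : ℕ → ZMod n) (Set.Iic (n / 2)) :=
  fun _ => residueLength_natCast

variable [NeZero n]

theorem residueLength_le (x : ZMod n) : residueLength x ≤ n / 2 := ZMod.natAbs_valMinAbs_le x

theorem residueLength_mem_Icc_iff {x : ZMod n} :
    residueLength x ∈ Set.Icc 1 (n / 2) ↔ x ≠ 0 := by
  rw [Set.mem_Icc, Nat.one_le_iff_ne_zero, Ne, residueLength_eq_zero, and_iff_left]
  exact residueLength_le x

open Finset in
theorem exists_notMem_residueLength_sub_notMem {A : Finset (ZMod n)} {U : Finset ℕ}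
    (h : #A + 2 * #U < n) (a : ZMod n) : ∃ x ∉ A, residueLength (x - a) ∉ U := by
  let bad : Finset (ZMod n) := A ∪ U.biUnion fun k => {a + k, a - k}
  have hbad : #bad < #(univ : Finset (ZMod n)) := calc
    #bad ≤ #A + #(U.biUnion fun k => {a + k, a - k}) := card_union_le ..
    _ ≤ #A + #U * 2 := by gcongr; exact card_biUnion_le_card_mul _ _ _ fun _ _ => card_le_two
    _ < #(univ : Finset (ZMod n)) := by rw [card_univ, ZMod.card]; omega
  obtain ⟨x, -, hx⟩ := exists_mem_notMem_of_card_lt_card hbad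
  refine ⟨x, fun hA => hx (mem_union_left _ hA), fun hU => hx (mem_union_right _ ?_)⟩
  have hlen : residueLength (x - a) = residueLength ((residueLength (x - a) : ℕ) : ZMod n) :=
    (residueLength_natCast (residueLength_le _)).symm
  refine mem_biUnion.mpr ⟨_, hU, ?_⟩
  rcases residueLength_eq_iff.mp hlen with h | h
  · exact mem_insert.mpr (.inl (sub_eq_iff_eq_add'.mp h))
  · exact mem_insert_of_mem (mem_singleton.mpr
      ((sub_eq_iff_eq_add'.mp h).trans (sub_eq_add_neg _ _).symm))

omit [NeZero n] in
open Finset in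
theorem exists_injOn_image_residueLength_eq [Fact n.Prime] {α : Type*} (a : α → ZMod n)
    {s : Finset α} {K : Finset ℕ} (hK : K ⊆ Icc 1 (n / 2)) (hcard : #s = #K) :
    ∃ ψ : α → ZMod n, Set.InjOn ψ s ∧ (fun i => residueLength (ψ i - a i)) '' s = K := by
  classical
  have hn : 0 < n := (Fact.out : n.Prime).pos
  have hleft := (leftInvOn_residueLength_natCast (n := n)).mono fun k hk => (mem_Icc.mp (hK hk)).2
  have hcardK : #K ≤ n / 2 := by simpa using card_le_card hK
  obtain ⟨ψ, hψ, hbij⟩ := exists_injOn_bijOn_sub (D := K.image ((↑) : ℕ → ZMod n)) a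
    (by rw [hcard, card_image_of_injOn hleft.injOn]) (by
      rw [Ne, ZMod.natCast_eq_zero_iff, (Fact.out : n.Prime).dvd_factorial]
      omega)
  refine ⟨ψ, hψ, ?_⟩
  rw [← Set.image_image residueLength, hbij.image_eq, coe_image, hleft.image_image]

end ResidueLength

namespace ParentTree

open Finset

variable {V : Type*} {P : ParentTree V}

@[elab_as_elim]
theorem induction_subtree [DecidableEq V] (P : ParentTree V) {motive : Finset V → Prop}
    (root : motive {P.root})
    (insert : ∀ (S : Finset V) (u : V), u ∉ S → P.root ∈ S → (∀ v ∈ S, P.par v ∈ S) →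
      P.par u ∈ S → motive S → motive (insert u S))
    (S : Finset V) (hroot : P.root ∈ S) (hpar : ∀ v ∈ S, P.par v ∈ S) : motive S := by
  induction hn : #S generalizing S with
  | zero => simp [card_eq_zero.mp hn] at hroot
  | succ n ih =>
    rcases (S.erase P.root).eq_empty_or_nonempty with hS | hS
    · rwa [← insert_erase hroot, hS, insert_empty_eq]
    obtain ⟨u, hu, hmax⟩ := exists_max_image _ P.depth hS
    obtain ⟨hur, huS⟩ := mem_erase.mp hu
    have hleaf : ∀ v ∈ S, P.par v ≠ u := by
      rintro v hv rfl
      have hvr : v ≠ P.root := by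
        rintro rfl
        exact hur P.par_root
      exact (hmax v (mem_erase.mpr ⟨hvr, hv⟩)).not_gt (depth_par_lt hvr)
    have hclosed : ∀ v ∈ S, P.par v ∈ S.erase u := fun v hv =>
      mem_erase.mpr ⟨hleaf v hv, hpar v hv⟩
    have hroot' : P.root ∈ S.erase u := mem_erase.mpr ⟨hur.symm, hroot⟩
    have hclosed' : ∀ v ∈ S.erase u, P.par v ∈ S.erase u := fun v hv =>
      hclosed v (mem_of_mem_erase hv)
    rw [← insert_erase huS]
    exact insert _ u (notMem_erase u S) hroot' hclosed' (hclosed u huS)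
      (ih _ hroot' hclosed' (by rw [card_erase_of_mem huS, hn, Nat.add_sub_cancel]))

theorem exists_rainbow_embedding {n : ℕ} [NeZero n] {S : Finset V} (hroot : P.root ∈ S)
    (hpar : ∀ v ∈ S, P.par v ∈ S) (hcard : 3 * #S ≤ n + 4) :
    ∃ φ : V → ZMod n, Set.InjOn φ S ∧
      Set.InjOn (fun v => residueLength (φ v - φ (P.par v))) (S \ {P.root}) := by
  classical
  revert hcard
  refine P.induction_subtree (fun _ => ⟨0, by simp, by simp⟩) ?_ S hroot hpar
  intro S u hu hroot hclosed hpar ih hcard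
  rw [card_insert_of_notMem hu] at hcard
  obtain ⟨φ, hφ, hlen⟩ := ih (by omega)
  let ℓ : V → ℕ := fun v => residueLength (φ v - φ (P.par v))
  have hcount : #(S.image φ) + 2 * #((S.erase P.root).image ℓ) < n := by
    have hS := card_image_le (s := S) (f := φ)
    have hedges := card_image_le (s := S.erase P.root) (f := ℓ)
    rw [card_erase_of_mem hroot] at hedges
    have := card_pos.mpr ⟨_, hroot⟩
    omega
  obtain ⟨x, hxφ, hxℓ⟩ := exists_notMem_residueLength_sub_notMem hcount (φ (P.par u))
  have hold : ∀ v ∈ S, Function.update φ u x v = φ v := fun v hv =>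
    Function.update_of_ne (ne_of_mem_of_not_mem hv hu) _ _
  have holdℓ : Set.EqOn ℓ (fun v => residueLength (Function.update φ u x v -
      Function.update φ u x (P.par v))) (S \ {P.root}) := fun v hv => by
    simp only [ℓ, hold v hv.1, hold _ (hclosed v hv.1)]
  have hur : u ≠ P.root := (ne_of_mem_of_not_mem hroot hu).symm
  refine ⟨Function.update φ u x, ?_, ?_⟩
  · rw [coe_insert, Set.injOn_insert hu]
    refine ⟨hφ.congr fun v hv => (hold v hv).symm, ?_⟩
    rintro ⟨v, hv, hvx⟩
    rw [hold v hv, Function.update_self] at hvx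
    exact hxφ (mem_image.mpr ⟨v, hv, hvx⟩)
  · rw [coe_insert, ← Set.insert_sdiff_singleton_comm hur, Set.injOn_insert fun h => hu h.1]
    refine ⟨hlen.congr holdℓ, ?_⟩
    rintro ⟨v, hv, hvx⟩
    rw [← holdℓ hv, Function.update_self, hold _ hpar] at hvx
    exact hxℓ (mem_image.mpr ⟨v, mem_erase.mpr ⟨hv.2, hv.1⟩, hvx⟩)

end ParentTree

namespace ParentTree

variable {V : Type*} {P : ParentTree V} {x₀ : V}

/-- A map of a tree to an abelian group as needed for the cyclic construction of decompositions:
disregarding the leaf `x₀`, its edges have nonzero differences, which represent every nonzero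
element up to sign, and no fibre contains two leaves or two other vertices. -/
structure IsDifferenceCover {A : Type*} [AddCommGroup A] (P : ParentTree V) (x₀ : V) (φ : V → A) :
    Prop where
  injOn_leaves : Set.InjOn φ (P.leaves \ {x₀})
  injOn_compl_leaves : Set.InjOn φ P.leavesᶜ
  ne_par : ∀ u, u ≠ x₀ → u ≠ P.root → φ u ≠ φ (P.par u)
  exists_sub_par_eq : ∀ x, x ≠ 0 → ∃ u, u ≠ x₀ ∧ u ≠ P.root ∧
    (φ u - φ (P.par u) = x ∨ φ u - φ (P.par u) = -x)

theorem isDifferenceCover_of_image_residueLength {n : ℕ} [NeZero n] {φ : V → ZMod n}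
    (hleaves : Set.InjOn φ (P.leaves \ {x₀})) (hinner : Set.InjOn φ P.leavesᶜ)
    (himage : (fun u => residueLength (φ u - φ (P.par u))) '' {x₀, P.root}ᶜ = Set.Icc 1 (n / 2)) :
    P.IsDifferenceCover x₀ φ where
  injOn_leaves := hleaves
  injOn_compl_leaves := hinner
  ne_par u hu₀ hur := by
    rw [← sub_ne_zero, ← residueLength_mem_Icc_iff, ← himage]
    exact ⟨u, by simp [hu₀, hur], rfl⟩
  exists_sub_par_eq x hx := by
    rw [← residueLength_mem_Icc_iff, ← himage] at hx
    obtain ⟨u, hu, hux⟩ := hx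
    simp only [Set.mem_compl_iff, Set.mem_insert_iff, Set.mem_singleton_iff, not_or] at hu
    exact ⟨u, hu.1, hu.2, residueLength_eq_iff.mp hux⟩

theorem compl_pair_root_eq_union (hx₀ : x₀ ∈ P.leaves) :
    ({x₀, P.root}ᶜ : Set V) = P.leaves \ {x₀} ∪ P.leavesᶜ \ {P.root} := by
  ext v
  by_cases hv : v ∈ P.leaves
  · have := ne_of_mem_of_not_mem hv root_notMem_leaves
    simp [hv, this]
  · have := ne_of_mem_of_not_mem hx₀ hv
    simp [hv, this.symm]

theorem ncard_leaves_diff_add_ncard_compl_diff [Finite V] (hx₀ : x₀ ∈ P.leaves) :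
    (P.leaves \ {x₀}).ncard + (P.leavesᶜ \ {P.root}).ncard + 2 = Nat.card V := by
  have hleaves := Set.ncard_sdiff_singleton_add_one hx₀
  have hinner := Set.ncard_sdiff_singleton_add_one (show P.root ∈ P.leavesᶜ from root_notMem_leaves)
  have := Set.ncard_add_ncard_compl P.leaves
  omega

theorem image_residueLength_subset_Icc {n : ℕ} [NeZero n] {φ : V → ZMod n}
    (hφ : Set.InjOn φ P.leavesᶜ) :
    (fun v => residueLength (φ v - φ (P.par v))) '' (P.leavesᶜ \ {P.root})
      ⊆ Set.Icc 1 (n / 2) := by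
  rintro _ ⟨v, ⟨hv, hvr⟩, rfl⟩
  rw [residueLength_mem_Icc_iff, sub_ne_zero]
  exact fun h => par_ne hvr (hφ hv (par_notMem_leaves v) h).symm

open Finset in
/-- Alon's theorem distributes over the leaves the lengths that the inner edges leave unused. -/
theorem exists_isDifferenceCover_of_injOn [Finite V] {n : ℕ} [Fact n.Prime]
    (hV : Nat.card V = n / 2 + 2) (hx₀ : x₀ ∈ P.leaves) {φ : V → ZMod n}
    (hφ : Set.InjOn φ P.leavesᶜ)
    (hrainbow : Set.InjOn (fun v => residueLength (φ v - φ (P.par v))) (P.leavesᶜ \ {P.root})) :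
    ∃ ψ : V → ZMod n, P.IsDifferenceCover x₀ ψ := by
  classical
  have := Fintype.ofFinite V
  let S : Finset V := (P.leavesᶜ \ {P.root}).toFinset
  let L : Finset V := (P.leaves \ {x₀}).toFinset
  let used : Finset ℕ := S.image fun v => residueLength (φ v - φ (P.par v))
  have hused : used ⊆ Icc 1 (n / 2) := by
    simpa [← coe_subset, used, S] using image_residueLength_subset_Icc hφ
  have hcard : #L = #(Icc 1 (n / 2) \ used) := by
    have : #L + #S + 2 = n / 2 + 2 := by
      rw [← hV, ← ncard_leaves_diff_add_ncard_compl_diff hx₀, Set.ncard_eq_toFinset_card',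
        Set.ncard_eq_toFinset_card']
    rw [card_sdiff_of_subset hused, card_image_of_injOn (by simpa [S] using hrainbow),
      Nat.card_Icc]
    omega
  obtain ⟨ψ, hψ, hψL⟩ :=
    exists_injOn_image_residueLength_eq (fun v => φ (P.par v)) sdiff_subset hcard
  have hχL : Set.EqOn (L.piecewise ψ φ) ψ L := fun v hv => piecewise_eq_of_mem _ _ _ hv
  have hχS : Set.EqOn (L.piecewise ψ φ) φ P.leavesᶜ := fun v hv =>
    piecewise_eq_of_notMem _ _ _ fun h => hv (Set.mem_toFinset.mp h).1
  refine ⟨L.piecewise ψ φ, isDifferenceCover_of_image_residueLength ?_ (hφ.congr hχS.symm) ?_⟩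
  · simpa [L] using hψ.congr hχL.symm
  · have hpar : ∀ v, L.piecewise ψ φ (P.par v) = φ (P.par v) := fun v => hχS (par_notMem_leaves v)
    have hL : (fun v => residueLength (L.piecewise ψ φ v - φ (P.par v))) '' L
        = (Icc 1 (n / 2) \ used : Finset ℕ) :=
      hψL ▸ Set.image_congr fun v hv => by rw [hχL hv]
    have hS : (fun v => residueLength (L.piecewise ψ φ v - φ (P.par v))) '' S = used := by
      rw [coe_image]
      exact Set.image_congr fun v hv => by rw [hχS (Set.mem_toFinset.mp hv).1]
    have hLS : (P.leaves \ {x₀} ∪ P.leavesᶜ \ {P.root} : Set V) = ↑L ∪ ↑S := by simp [L, S]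
    simp only [hpar]
    rw [compl_pair_root_eq_union hx₀, hLS, Set.image_union, hL, hS, ← coe_union,
      sdiff_union_of_subset hused, coe_Icc]

theorem exists_isDifferenceCover [Finite V] {m : ℕ} (hp : (2 * m + 1).Prime)
    (hV : Nat.card V = m + 2) (hL : m + 2 ≤ 3 * P.leaves.ncard) (hx₀ : x₀ ∈ P.leaves) :
    ∃ φ : V → ZMod (2 * m + 1), P.IsDifferenceCover x₀ φ := by
  classical
  have := Fintype.ofFinite V
  have : Fact (2 * m + 1).Prime := ⟨hp⟩
  have hcard : 3 * P.leavesᶜ.toFinset.card ≤ 2 * m + 1 + 4 := by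
    have := Set.ncard_add_ncard_compl P.leaves
    rw [← Set.ncard_eq_toFinset_card']
    omega
  obtain ⟨φ, hφ, hrainbow⟩ := exists_rainbow_embedding
    (by simpa using root_notMem_leaves) (fun v _ => by simpa using par_notMem_leaves v) hcard
  exact exists_isDifferenceCover_of_injOn (by omega) hx₀ (by simpa using hφ)
    (by simpa using hrainbow)

end ParentTree

/-! ### Lifting to the complete graph -/

section Decomposes

variable {α β β' : Type} {H : SimpleGraph α} {G : SimpleGraph β} {G' : SimpleGraph β'}

theorem Decomposes.congr_right (h : Decomposes H G) (e : G ≃g G') : Decomposes H G' := by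
  obtain ⟨ι, f, hinj, hhom, hcov⟩ := h
  refine ⟨ι, fun i => e ∘ f i, fun i => e.injective.comp (hinj i),
    fun i a b hab => e.map_adj_iff.mpr (hhom i a b hab), fun d hd => ?_⟩
  have hmem : Sym2.map e.symm d ∈ G.edgeSet := by
    induction d using Sym2.ind with
    | _ x y => exact e.symm.map_adj_iff.mpr hd
  have hmap (z : Sym2 β) : Sym2.map e z = d ↔ z = Sym2.map e.symm d := by
    rw [← (Sym2.map.injective e.symm.injective).eq_iff, Sym2.map_map]
    simp
  simpa only [← Sym2.map_map, hmap] using hcov _ hmem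

theorem decomposes_of_cover {ι : Type} [Finite ι] [Finite α] (f : ι → α → β)
    (hinj : ∀ i, Function.Injective (f i))
    (hhom : ∀ i a b, H.Adj a b → G.Adj (f i a) (f i b))
    (hcov : ∀ x y, G.Adj x y → ∃ i a b, H.Adj a b ∧ s(f i a, f i b) = s(x, y))
    (hcard : Nat.card ι * Nat.card H.edgeSet ≤ Nat.card G.edgeSet) : Decomposes H G := by
  have hmap (i : ι) : ∀ d ∈ H.edgeSet, Sym2.map (f i) d ∈ G.edgeSet := fun d hd => by
    induction d using Sym2.ind with
    | _ x y => exact hhom i x y hd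
  let Φ : ι × H.edgeSet → G.edgeSet := fun q => ⟨Sym2.map (f q.1) q.2.1, hmap q.1 _ q.2.2⟩
  have hΦ : Function.Surjective Φ := by
    rintro ⟨d, hd⟩
    induction d using Sym2.ind with
    | _ x y =>
      obtain ⟨i, a, b, hab, h⟩ := hcov x y hd
      exact ⟨(i, ⟨s(a, b), hab⟩), Subtype.ext h⟩
  have hinjΦ : Function.Injective Φ :=
    (hΦ.bijective_of_nat_card_le (by rwa [Nat.card_prod])).injective
  refine ⟨ι, f, hinj, hhom, fun d hd => ?_⟩
  obtain ⟨⟨i, q⟩, hq⟩ := hΦ ⟨d, hd⟩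
  refine ⟨(i, q), ⟨q.2, congrArg Subtype.val hq⟩, ?_⟩
  rintro ⟨i', q'⟩ ⟨hq', hd'⟩
  have := @hinjΦ (i', ⟨q', hq'⟩) (i, q) (hq ▸ Subtype.ext hd')
  simp only [Prod.mk.injEq] at this ⊢
  exact ⟨this.1, congrArg Subtype.val this.2⟩

end Decomposes

section CompleteMinusEdge

variable {α β : Type*} {a b : α} {a' b' : β}

theorem card_edgeSet_top_deleteEdges_add_one [Finite α] (hab : a ≠ b) :
    Nat.card ((⊤ : SimpleGraph α).deleteEdges {s(a, b)}).edgeSet + 1 =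
      (Nat.card α).choose 2 := by
  classical
  have := Fintype.ofFinite α
  rw [SimpleGraph.edgeSet_deleteEdges, Nat.card_coe_set_eq,
    Set.ncard_sdiff_singleton_add_one (by simpa using hab), Nat.card_eq_fintype_card,
    ← SimpleGraph.card_edgeFinset_top_eq_card_choose_two, ← SimpleGraph.coe_edgeFinset,
    Set.ncard_coe_finset]

theorem nonempty_iso_top_deleteEdges (e : α ≃ β) (hab : a ≠ b) (hab' : a' ≠ b') :
    Nonempty ((⊤ : SimpleGraph α).deleteEdges {s(a, b)} ≃g
      (⊤ : SimpleGraph β).deleteEdges {s(a', b')}) := by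
  classical
  obtain ⟨g, rfl, rfl⟩ : ∃ g : α ≃ β, g a = a' ∧ g b = b' := by
    let e₁ := e.trans (Equiv.swap (e a) a')
    have ha : e₁ a = a' := by simp [e₁]
    have hb : a' ≠ e₁ b := ha ▸ e₁.injective.ne hab
    exact ⟨e₁.trans (Equiv.swap (e₁ b) b'),
      by simp [ha, Equiv.swap_apply_of_ne_of_ne hb hab'], by simp⟩
  exact ⟨⟨g, by simp [g.injective.eq_iff]⟩⟩

end CompleteMinusEdge

/-- Four pairwise independent linear forms on the plane over the field with three elements. -/
def planeForm (k : Fin 4) (q : ZMod 3 × ZMod 3) : ZMod 3 := ![q.1, q.2, q.1 + q.2, q.1 + 2 * q.2] k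

theorem exists_planeForm_eq :
    ∀ k k' : Fin 4, k ≠ k' → ∀ a a', ∃ q, planeForm k q = a ∧ planeForm k' q = a' := by
  decide

namespace ParentTree

section Copies

variable {V A : Type*} [AddCommGroup A]

/-- The end of the pendant edge at `(y, a)` that has the index `b`: one of the two apices, or the
preceding vertex of the same fibre. As `y`, `a` and `b` vary, these edges are all those at an apex
and all those inside a fibre. -/
def pendantEnd (y : A) (a b : ZMod 3) : (A × ZMod 3) ⊕ Bool :=
  if b = 0 then Sum.inl (y, a - 1) else Sum.inr (decide (b = 1))

open Classical in
/-- The copies of a tree `P`, indexed by `A × ZMod 3 × ZMod 3`, in the complete graph on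
`A × ZMod 3` and two apices. They are translates of a map `φ` of the tree to `A`, lifted to
`A × ZMod 3` by the linear forms that a colouring `c` assigns to the points of `A`. The shift by `1`
separates the leaves from the other vertices; the leaf `x₀` is treated separately. -/
noncomputable def copy (P : ParentTree V) (x₀ : V) (φ : V → A) (c : A → Fin 4)
    (q : A × ZMod 3 × ZMod 3) (v : V) : (A × ZMod 3) ⊕ Bool :=
  if v = x₀ then
    pendantEnd (φ (P.par x₀) + q.1) (planeForm (c (φ (P.par x₀))) q.2)
      (planeForm (c (φ (P.par x₀)) + 1) q.2)
  else Sum.inl (φ v + q.1, planeForm (c (φ v)) q.2 + if v ∈ P.leaves then 1 else 0)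

variable {P : ParentTree V} {x₀ u v : V} {φ : V → A} {c : A → Fin 4} {q : A × ZMod 3 × ZMod 3}

theorem copy_self : P.copy x₀ φ c q x₀ = pendantEnd (φ (P.par x₀) + q.1)
    (planeForm (c (φ (P.par x₀))) q.2) (planeForm (c (φ (P.par x₀)) + 1) q.2) :=
  if_pos rfl

open Classical in
theorem copy_of_ne (hv : v ≠ x₀) : P.copy x₀ φ c q v =
    Sum.inl (φ v + q.1, planeForm (c (φ v)) q.2 + if v ∈ P.leaves then 1 else 0) :=
  if_neg hv

theorem copy_par (hx₀ : x₀ ∈ P.leaves) (v : V) : P.copy x₀ φ c q (P.par v) =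
    Sum.inl (φ (P.par v) + q.1, planeForm (c (φ (P.par v))) q.2) := by
  rw [copy_of_ne (ne_of_mem_of_not_mem hx₀ (par_notMem_leaves v)).symm,
    if_neg (par_notMem_leaves v), add_zero]

theorem eq_of_copy_eq_inr {b : Bool} (h : P.copy x₀ φ c q v = Sum.inr b) : v = x₀ := by
  by_contra hv
  simp [copy_of_ne hv] at h

theorem copy_ne_copy_self (hv : v ≠ x₀) : P.copy x₀ φ c q v ≠ P.copy x₀ φ c q x₀ := by
  classical
  have hshift : (if v ∈ P.leaves then 1 else 0 : ZMod 3) ≠ -1 := by split_ifs <;> decide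
  rw [copy_of_ne hv, copy_self, pendantEnd]
  generalize (if v ∈ P.leaves then 1 else 0 : ZMod 3) = γ at hshift ⊢
  split_ifs
  · simp only [ne_eq, Sum.inl.injEq, Prod.mk.injEq, add_left_inj, not_and]
    intro h
    rwa [h, sub_eq_add_neg, add_right_inj]
  · exact Sum.inl_ne_inr

theorem copy_injective (hφ : P.IsDifferenceCover x₀ φ) (c : A → Fin 4)
    (q : A × ZMod 3 × ZMod 3) : Function.Injective (P.copy x₀ φ c q) := by
  intro u v h
  by_cases hu : u = x₀ <;> by_cases hv : v = x₀
  · rw [hu, hv]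
  · exact absurd (hu ▸ h).symm (copy_ne_copy_self hv)
  · exact absurd (hv ▸ h) (copy_ne_copy_self hu)
  · rw [copy_of_ne hu, copy_of_ne hv] at h
    simp only [Sum.inl.injEq, Prod.mk.injEq, add_left_inj] at h
    obtain ⟨huv, hshift⟩ := h
    rw [huv, add_right_inj] at hshift
    by_cases hul : u ∈ P.leaves <;> by_cases hvl : v ∈ P.leaves <;>
      simp only [hul, hvl, if_true, if_false, one_ne_zero, zero_ne_one] at hshift
    · exact hφ.injOn_leaves ⟨hul, hu⟩ ⟨hvl, hv⟩ huv
    · exact hφ.injOn_compl_leaves hul hvl huv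

theorem exists_copy_eq_of_sub_eq (hx₀ : x₀ ∈ P.leaves) (hu : u ≠ x₀)
    (hc : c (φ u) ≠ c (φ (P.par u))) {y y' : A} (hy : φ u - φ (P.par u) = y - y')
    (a a' : ZMod 3) :
    ∃ q, P.copy x₀ φ c q u = Sum.inl (y, a) ∧ P.copy x₀ φ c q (P.par u) = Sum.inl (y', a') := by
  classical
  obtain ⟨q, hq, hq'⟩ := exists_planeForm_eq _ _ hc (a - if u ∈ P.leaves then 1 else 0) a'
  refine ⟨(y - φ u, q), ?_, ?_⟩
  · rw [copy_of_ne hu, hq, add_sub_cancel, sub_add_cancel]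
  · rw [copy_par hx₀, hq', show φ (P.par u) + (y - φ u) = y' by
      rw [← sub_eq_zero, ← sub_eq_zero.mpr hy.symm]; abel]

theorem exists_copy_eq_pendantEnd (hx₀ : x₀ ∈ P.leaves) (φ : V → A) (c : A → Fin 4) (y : A)
    (a b : ZMod 3) : ∃ q, P.copy x₀ φ c q (P.par x₀) = Sum.inl (y, a) ∧
      P.copy x₀ φ c q x₀ = pendantEnd y a b := by
  have hne : ∀ k : Fin 4, k ≠ k + 1 := by decide
  obtain ⟨q, rfl, rfl⟩ := exists_planeForm_eq _ _ (hne (c (φ (P.par x₀)))) a b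
  refine ⟨(y - φ (P.par x₀), q), ?_, ?_⟩
  · rw [copy_par hx₀, add_sub_cancel]
  · rw [copy_self, add_sub_cancel]

theorem exists_copy_edge_eq_pendant (hx₀ : x₀ ∈ P.leaves) (φ : V → A) (c : A → Fin 4) (y : A)
    (a b : ZMod 3) : ∃ q u v, P.graph.Adj u v ∧
      s(P.copy x₀ φ c q u, P.copy x₀ φ c q v) = s(Sum.inl (y, a), pendantEnd y a b) := by
  obtain ⟨q, hpar, hself⟩ := exists_copy_eq_pendantEnd hx₀ φ c y a b
  have hne : x₀ ≠ P.root := ne_of_mem_of_not_mem hx₀ root_notMem_leaves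
  exact ⟨q, P.par x₀, x₀, (graph_adj_par hne).symm, by rw [hpar, hself]⟩

theorem exists_copy_edge_eq_inl (hx₀ : x₀ ∈ P.leaves) (hφ : P.IsDifferenceCover x₀ φ)
    (hc : ∀ u, u ≠ x₀ → u ≠ P.root → c (φ u) ≠ c (φ (P.par u))) {y y' : A} (hy : y ≠ y')
    (a a' : ZMod 3) : ∃ q u v, P.graph.Adj u v ∧
      s(P.copy x₀ φ c q u, P.copy x₀ φ c q v) = s(Sum.inl (y, a), Sum.inl (y', a')) := by
  obtain ⟨u, hu₀, hur, hu | hu⟩ := hφ.exists_sub_par_eq _ (sub_ne_zero.mpr hy)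
  · obtain ⟨q, h, hpar⟩ := exists_copy_eq_of_sub_eq hx₀ hu₀ (hc u hu₀ hur) hu a a'
    exact ⟨q, u, P.par u, graph_adj_par hur, by rw [h, hpar]⟩
  · rw [neg_sub] at hu
    obtain ⟨q, h, hpar⟩ := exists_copy_eq_of_sub_eq hx₀ hu₀ (hc u hu₀ hur) hu a' a
    exact ⟨q, P.par u, u, (graph_adj_par hur).symm, by rw [h, hpar]⟩

theorem exists_copy_edge_eq (hx₀ : x₀ ∈ P.leaves) (hφ : P.IsDifferenceCover x₀ φ)
    (hc : ∀ u, u ≠ x₀ → u ≠ P.root → c (φ u) ≠ c (φ (P.par u))) {w z : (A × ZMod 3) ⊕ Bool}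
    (hwz : ((⊤ : SimpleGraph _).deleteEdges {s(Sum.inr false, Sum.inr true)}).Adj w z) :
    ∃ q u v, P.graph.Adj u v ∧ s(P.copy x₀ φ c q u, P.copy x₀ φ c q v) = s(w, z) := by
  have hapex (y : A) (a : ZMod 3) (b : Bool) : ∃ q u v, P.graph.Adj u v ∧
      s(P.copy x₀ φ c q u, P.copy x₀ φ c q v) = s(Sum.inl (y, a), Sum.inr b) := by
    cases b
    · exact exists_copy_edge_eq_pendant hx₀ φ c y a 2
    · exact exists_copy_edge_eq_pendant hx₀ φ c y a 1
  have hsucc : ∀ a a' : ZMod 3, a ≠ a' → a' = a - 1 ∨ a = a' - 1 := by decide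
  rcases w with ⟨y, a⟩ | b <;> rcases z with ⟨y', a'⟩ | b'
  · by_cases hy : y = y'
    · subst hy
      rcases hsucc a a' fun h => hwz.ne (by rw [h]) with rfl | rfl
      · exact exists_copy_edge_eq_pendant hx₀ φ c y a 0
      · rw [Sym2.eq_swap]
        exact exists_copy_edge_eq_pendant hx₀ φ c y a' 0
    · exact exists_copy_edge_eq_inl hx₀ hφ hc hy a a'
  · exact hapex y a b'
  · rw [Sym2.eq_swap]
    exact hapex y' a' b
  · rw [SimpleGraph.deleteEdges_adj, SimpleGraph.top_adj, Set.mem_singleton_iff] at hwz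
    cases b <;> cases b' <;> simp at hwz

end Copies

theorem decomposes_of_isDifferenceCover {V A : Type} [AddCommGroup A] [Finite A] [Finite V]
    {P : ParentTree V} {x₀ : V} {φ : V → A} {m : ℕ} (hV : Nat.card V = m + 2)
    (hA : Nat.card A = 2 * m + 1) (hx₀ : x₀ ∈ P.leaves) (hφ : P.IsDifferenceCover x₀ φ) :
    Decomposes P.graph ((⊤ : SimpleGraph ((A × ZMod 3) ⊕ Bool)).deleteEdges
      {s(Sum.inr false, Sum.inr true)}) := by
  obtain ⟨c, hc⟩ := exists_coloring_fin_four hx₀ hφ.injOn_leaves hφ.injOn_compl_leaves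
  refine decomposes_of_cover (P.copy x₀ φ c) (copy_injective hφ c) (fun q u v huv => ?_)
    (fun x y => exists_copy_edge_eq hx₀ hφ fun u hu₀ hur => hc u hu₀ hur (hφ.ne_par u hu₀ hur)) ?_
  · rw [SimpleGraph.deleteEdges_adj, SimpleGraph.top_adj, Set.mem_singleton_iff]
    refine ⟨(copy_injective hφ c q).ne huv.ne, fun h => ?_⟩
    rcases Sym2.eq_iff.mp h with ⟨hu, hv⟩ | ⟨hu, hv⟩ <;>
      exact huv.ne ((eq_of_copy_eq_inr hu).trans (eq_of_copy_eq_inr hv).symm)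
  · have hP : Nat.card P.graph.edgeSet + 1 = m + 2 := by
      rw [Nat.card_coe_set_eq, ncard_edgeSet_graph_add_one, hV]
    have hK := card_edgeSet_top_deleteEdges_add_one
      (show (Sum.inr false : (A × ZMod 3) ⊕ Bool) ≠ Sum.inr true by simp)
    have hchoose : (6 * m + 5).choose 2 = (2 * m + 1) * 9 * (m + 1) + 1 := by
      rw [Nat.choose_two_right, show 6 * m + 5 - 1 = 6 * m + 4 by omega]
      exact Nat.div_eq_of_eq_mul_left two_pos (by ring)
    rw [show Nat.card ((A × ZMod 3) ⊕ Bool) = 6 * m + 5 by simp [hA]; ring, hchoose,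
      add_left_inj] at hK
    rw [hK, show Nat.card P.graph.edgeSet = m + 1 by omega]
    simp [hA]

theorem decomposes_complete_minus_edge {V : Type} [Finite V] {P : ParentTree V} {m : ℕ}
    (hp : (2 * m + 1).Prime) (hV : Nat.card V = m + 2) (hL : m + 2 ≤ 3 * P.leaves.ncard)
    {a b : Fin (6 * m + 5)} (hab : a ≠ b) :
    Decomposes P.graph ((⊤ : SimpleGraph (Fin (6 * m + 5))).deleteEdges {s(a, b)}) := by
  obtain ⟨x₀, hx₀⟩ : P.leaves.Nonempty := by
    rw [← Set.ncard_pos]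
    omega
  obtain ⟨φ, hφ⟩ := exists_isDifferenceCover hp hV hL hx₀
  have e : (ZMod (2 * m + 1) × ZMod 3) ⊕ Bool ≃ Fin (6 * m + 5) :=
    Finite.equivFinOfCardEq (by simp; ring)
  obtain ⟨g⟩ := nonempty_iso_top_deleteEdges e
    (show (Sum.inr false : (ZMod (2 * m + 1) × ZMod 3) ⊕ Bool) ≠ Sum.inr true by simp) hab
  exact (decomposes_of_isDifferenceCover hV (by simp) hx₀ hφ).congr_right g

end ParentTree

/-! ### Matula's coding of rooted trees -/

namespace Matula

/-- Matula's coding of rooted trees by natural numbers, shifted by one: the number `c` codes the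
tree whose principal subtrees have as codes the indices of the primes occurring in the factorisation
of `c + 1`. -/
noncomputable def kids : ℕ ≃ Multiset ℕ where
  toFun c := ((c + 1).primeFactorsList : Multiset ℕ).map (Nat.count Nat.Prime)
  invFun M := (M.map (Nat.nth Nat.Prime)).prod - 1
  left_inv c := by
    dsimp only
    have hnth : ∀ p ∈ ((c + 1).primeFactorsList : Multiset ℕ),
        (Nat.nth Nat.Prime ∘ Nat.count Nat.Prime) p = id p := fun p hp =>
      Nat.nth_count (Nat.prime_of_mem_primeFactorsList (Multiset.mem_coe.mp hp))
    rw [Multiset.map_map, Multiset.map_congr rfl hnth, Multiset.map_id, Multiset.prod_coe,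
      Nat.prod_primeFactorsList c.succ_ne_zero, Nat.succ_sub_one]
  right_inv M := by
    have hprime : ∀ p ∈ M.map (Nat.nth Nat.Prime), p.Prime := fun p hp => by
      obtain ⟨k, -, rfl⟩ := Multiset.mem_map.mp hp
      exact Nat.prime_nth_prime k
    have hfactors := UniqueFactorizationMonoid.normalizedFactors_prod_of_prime fun p hp =>
      (hprime p hp).prime
    rw [Nat.factors_eq] at hfactors
    dsimp only
    rw [Nat.sub_add_cancel (Multiset.prod_pos fun p hp => (hprime p hp).pos), hfactors,
      Multiset.map_map]
    simp [Nat.count_nth_of_infinite Nat.infinite_setOfPred_prime]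

variable {c k : ℕ}

theorem prod_nth_prime_kids (c : ℕ) : ((kids c).map (Nat.nth Nat.Prime)).prod = c + 1 := by
  have hpos : 0 < ((kids c).map (Nat.nth Nat.Prime)).prod := Multiset.prod_pos fun p hp => by
    obtain ⟨k, -, rfl⟩ := Multiset.mem_map.mp hp
    exact (Nat.prime_nth_prime k).pos
  have : ((kids c).map (Nat.nth Nat.Prime)).prod - 1 = c := kids.symm_apply_apply c
  omega

theorem lt_of_mem_kids (hk : k ∈ kids c) : k < c := by
  have hdvd : Nat.nth Nat.Prime k ∣ c + 1 := by
    rw [← prod_nth_prime_kids c]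
    exact Multiset.dvd_prod (Multiset.mem_map_of_mem _ hk)
  have := Nat.le_of_dvd c.succ_pos hdvd
  have := Nat.add_two_le_nth_prime k
  omega

theorem kids_eq_zero_iff : kids c = 0 ↔ c = 0 := by
  have hzero : kids 0 = 0 :=
    Multiset.eq_zero_of_forall_notMem fun k hk => Nat.not_lt_zero k (lt_of_mem_kids hk)
  rw [← hzero, kids.apply_eq_iff_eq]

theorem kids_zero : kids 0 = 0 :=
  kids_eq_zero_iff.mpr rfl

theorem kids_one : kids 1 = {0} := by
  obtain ⟨c, hc⟩ := kids.surjective {0}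
  have := prod_nth_prime_kids c
  rw [hc, Multiset.map_singleton, Multiset.prod_singleton, Nat.nth_prime_zero_eq_two] at this
  rw [← hc, show c = 1 by omega]

/-- The number of vertices of the tree coded by `c`. -/
noncomputable def verts (c : ℕ) : ℕ := 1 + ((kids c).attach.map fun k => verts k.1).sum
termination_by c
decreasing_by exact lt_of_mem_kids k.2

/-- The number of childless vertices of the tree coded by `c`. -/
noncomputable def tips (c : ℕ) : ℕ :=
  if c = 0 then 1 else ((kids c).attach.map fun k => tips k.1).sum
termination_by c
decreasing_by exact lt_of_mem_kids k.2

theorem verts_eq (c : ℕ) : verts c = 1 + ((kids c).map verts).sum := by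
  rw [verts, Multiset.attach_map_val' (kids c) verts]

theorem tips_of_ne_zero (hc : c ≠ 0) : tips c = ((kids c).map tips).sum := by
  rw [tips, if_neg hc, Multiset.attach_map_val' (kids c) tips]

theorem verts_zero : verts 0 = 1 := by
  rw [verts_eq, kids_zero, Multiset.map_zero, Multiset.sum_zero, add_zero]

theorem tips_zero : tips 0 = 1 := by
  rw [tips, if_pos rfl]

theorem verts_one : verts 1 = 2 := by
  rw [verts_eq, kids_one, Multiset.map_singleton, Multiset.sum_singleton, verts_zero]

theorem tips_one : tips 1 = 1 := by
  simp [tips_of_ne_zero, kids_one, tips_zero]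

theorem verts_pos (c : ℕ) : 1 ≤ verts c := by
  rw [verts_eq]
  omega

theorem verts_lt_of_mem_kids (hk : k ∈ kids c) : verts k < verts c := by
  rw [verts_eq c]
  have := Multiset.single_le_sum (by simp) _ (Multiset.mem_map_of_mem verts hk)
  omega

theorem tips_pos (c : ℕ) : 1 ≤ tips c := by
  induction c using Nat.strong_induction_on with
  | _ c ih =>
    by_cases hc : c = 0
    · rw [hc, tips_zero]
    · obtain ⟨k, hk⟩ := Multiset.exists_mem_of_ne_zero (mt kids_eq_zero_iff.mp hc)
      rw [tips_of_ne_zero hc]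
      exact (ih k (lt_of_mem_kids hk)).trans
        (Multiset.single_le_sum (by simp) _ (Multiset.mem_map_of_mem _ hk))

theorem two_le_verts (hc : c ≠ 0) : 2 ≤ verts c := by
  obtain ⟨k, hk⟩ := Multiset.exists_mem_of_ne_zero (mt kids_eq_zero_iff.mp hc)
  have := verts_lt_of_mem_kids hk
  have := verts_pos k
  omega

theorem three_le_verts (hc₀ : c ≠ 0) (hc₁ : c ≠ 1) : 3 ≤ verts c := by
  obtain ⟨k, hk⟩ := Multiset.exists_mem_of_ne_zero (mt kids_eq_zero_iff.mp hc₀)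
  obtain ⟨M, hM⟩ := Multiset.exists_cons_of_mem hk
  rcases M.empty_or_exists_mem with rfl | ⟨l, hl⟩
  · have hk₀ : k ≠ 0 := by
      rintro rfl
      exact hc₁ (kids.injective (hM.trans kids_one.symm))
    have := verts_lt_of_mem_kids hk
    have := two_le_verts hk₀
    omega
  · rw [verts_eq, hM, Multiset.map_cons, Multiset.sum_cons]
    have := Multiset.single_le_sum (by simp) _ (Multiset.mem_map_of_mem verts hl)
    have := verts_pos k
    have := verts_pos l
    omega

end Matula

open scoped Classical in
theorem exists_bijOn_of_map_val_eq {α β γ : Type*} [Nonempty β] {s : Finset α} {t : Finset β}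
    {f : α → γ} {g : β → γ} (h : s.val.map f = t.val.map g) :
    ∃ σ : α → β, Set.BijOn σ s t ∧ ∀ a ∈ s, g (σ a) = f a := by
  induction s using Finset.induction generalizing t with
  | empty =>
    obtain rfl : t = ∅ := by simpa using h.symm
    exact ⟨fun _ => Classical.arbitrary β, by simp⟩
  | insert a s ha ih =>
    have hmap : (insert a s).val.map f = f a ::ₘ s.val.map f := by
      rw [Finset.insert_val_of_notMem ha, Multiset.map_cons]
    obtain ⟨b, hb, hba⟩ : ∃ b ∈ t, g b = f a := Multiset.mem_map.mp (by
      rw [← h, hmap]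
      exact Multiset.mem_cons_self _ _)
    obtain ⟨σ, hσ, hgσ⟩ := ih (t := t.erase b) (by
      rw [← Multiset.cons_inj_right (f a), ← hmap, h, ← hba, Finset.erase_val,
        ← Multiset.map_cons, Multiset.cons_erase hb])
    have hupdate : ∀ x ∈ s, Function.update σ a b x = σ x := fun x hx =>
      Function.update_of_ne (ne_of_mem_of_not_mem hx ha) _ _
    refine ⟨Function.update σ a b, ?_, ?_⟩
    · have hs : Set.BijOn (Function.update σ a b) s (t.erase b) :=
        hσ.congr fun x hx => (hupdate x hx).symm
      have := hs.insert (a := a) (by simp)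
      rwa [Function.update_self, ← Finset.coe_insert, ← Finset.coe_insert,
        Finset.insert_erase hb] at this
    · rintro x hx
      rcases Finset.mem_insert.mp hx with rfl | hx
      · rw [Function.update_self, hba]
      · rw [hupdate x hx, hgσ x hx]

namespace ParentTree

open Matula

variable {V W : Type*}

theorem exists_eq_step_par (P : ParentTree V) (r : W) (step : V → W → W) :
    ∃ f : V → W, f P.root = r ∧ ∀ v, v ≠ P.root → f v = step v (f (P.par v)) := by
  classical
  let F (v : V) (f : (u : V) → P.depth u < P.depth v → W) : W :=
    if hv : v = P.root then r else step v (f (P.par v) (depth_par_lt hv))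
  refine ⟨(measure P.depth).wf.fix F, ?_, fun v hv => ?_⟩
  · rw [WellFounded.fix_eq]
    simp [F]
  · rw [WellFounded.fix_eq]
    simp [F, hv]

section Coding

variable [Fintype V] [Fintype W] {P : ParentTree V} {Q : ParentTree W} {v w : V}

open scoped Classical in
/-- The children of a vertex. -/
noncomputable def children (P : ParentTree V) (v : V) : Finset V :=
  {w | w ≠ P.root ∧ P.par w = v}

theorem mem_children : w ∈ P.children v ↔ w ≠ P.root ∧ P.par w = v := by
  simp [children]

theorem mem_children_par (hv : v ≠ P.root) : v ∈ P.children (P.par v) :=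
  mem_children.mpr ⟨hv, rfl⟩

theorem wellFounded_mem_children (P : ParentTree V) :
    WellFounded fun w v => w ∈ P.children v := by
  have : IsTrans V fun w v => P.depth v < P.depth w := ⟨fun _ _ _ h h' => h'.trans h⟩
  have : Std.Irrefl fun w v => P.depth v < P.depth w := ⟨fun _ => lt_irrefl _⟩
  refine Subrelation.wf (fun {w v} hw => ?_)
    (Finite.wellFounded_of_trans_of_irrefl fun w v => P.depth v < P.depth w)
  obtain ⟨hwr, rfl⟩ := mem_children.mp hw
  exact depth_par_lt hwr

/-- Matula's code of the subtree below a vertex. -/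
noncomputable def codeAt (P : ParentTree V) : V → ℕ :=
  P.wellFounded_mem_children.fix fun v codeAt =>
    kids.symm ((P.children v).val.attach.map fun w => codeAt w.1 w.2)

theorem kids_codeAt (P : ParentTree V) (v : V) :
    kids (P.codeAt v) = (P.children v).val.map P.codeAt := by
  rw [codeAt, WellFounded.fix_eq, Equiv.apply_symm_apply]
  exact Multiset.attach_map_val' _ _

theorem eq_codeAt {g : V → ℕ} (hg : ∀ v, kids (g v) = (P.children v).val.map g) :
    g = P.codeAt := by
  funext v
  induction v using P.wellFounded_mem_children.induction with
  | _ v ih =>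
    apply kids.injective
    rw [hg, kids_codeAt]
    exact Multiset.map_congr rfl ih

/-- Matula's code of a rooted tree. -/
noncomputable def code (P : ParentTree V) : ℕ := P.codeAt P.root

theorem code_eq {g : V → ℕ} (hg : ∀ v, kids (g v) = (P.children v).val.map g) :
    P.code = g P.root := by
  rw [code, eq_codeAt hg]

theorem Isom.code_eq (h : P.Isom Q) : P.code = Q.code := by
  obtain ⟨e, hroot, hpar⟩ := h
  have hchildren (v : V) : Q.children (e v) = (P.children v).map e.toEmbedding := by
    ext w
    obtain ⟨u, rfl⟩ := e.surjective w
    rw [mem_children, ← hroot, ← hpar]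
    simp [mem_children]
  rw [ParentTree.code_eq (g := Q.codeAt ∘ e), Function.comp_apply, hroot, code]
  intro v
  rw [Function.comp_apply, kids_codeAt, hchildren, Finset.map_val, Multiset.map_map]
  rfl

theorem isom_of_bijOn_children {f : V → W} (hroot : f P.root = Q.root)
    (hf : ∀ v, Set.BijOn f (P.children v) (Q.children (f v))) : P.Isom Q := by
  have hstep (v : V) (hv : v ≠ P.root) : f v ≠ Q.root ∧ Q.par (f v) = f (P.par v) :=
    mem_children.mp ((hf (P.par v)).mapsTo (mem_children_par hv))
  have hinj : Function.Injective f := by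
    intro u
    induction u using P.induction_par with
    | root =>
      intro v huv
      by_contra hv
      exact (hstep v (Ne.symm hv)).1 (huv.symm.trans hroot)
    | step u hu ih =>
      intro v huv
      have hv : v ≠ P.root := fun hv => (hstep u hu).1 (by rw [huv, hv, hroot])
      have hpar : P.par u = P.par v := ih (by rw [← (hstep u hu).2, ← (hstep v hv).2, huv])
      exact (hf (P.par u)).injOn (mem_children_par hu) (hpar ▸ mem_children_par hv) huv
  have hsurj : Function.Surjective f := by
    intro w
    induction w using Q.induction_par with
    | root => exact ⟨P.root, hroot⟩
    | step w hw ih =>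
      obtain ⟨v, hv⟩ := ih
      obtain ⟨u, -, rfl⟩ := (hf v).surjOn (mem_children.mpr ⟨hw, hv.symm⟩)
      exact ⟨u, rfl⟩
  refine ⟨Equiv.ofBijective f ⟨hinj, hsurj⟩, hroot, fun v => ?_⟩
  by_cases hv : v = P.root
  · rw [hv, P.par_root]
    change f P.root = Q.par (f P.root)
    rw [hroot, Q.par_root]
  · exact (hstep v hv).2.symm

theorem isom_of_code_eq (h : P.code = Q.code) : P.Isom Q := by
  have : Nonempty W := ⟨Q.root⟩
  have hs (v : V) (w : W) : ∃ s : V → W, P.codeAt v = Q.codeAt w →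
      Set.BijOn s (P.children v) (Q.children w) ∧
        ∀ u ∈ P.children v, Q.codeAt (s u) = P.codeAt u := by
    by_cases hvw : P.codeAt v = Q.codeAt w
    · have hmap := congrArg kids hvw
      rw [kids_codeAt, kids_codeAt] at hmap
      obtain ⟨s, hs⟩ := exists_bijOn_of_map_val_eq hmap
      exact ⟨s, fun _ => hs⟩
    · exact ⟨fun _ => Q.root, fun h => absurd h hvw⟩
  choose s hs using hs
  obtain ⟨f, hroot, hf⟩ := P.exists_eq_step_par Q.root fun v w => s (P.par v) w v
  have hcode (v : V) : P.codeAt v = Q.codeAt (f v) := by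
    induction v using P.induction_par with
    | root => rwa [hroot]
    | step v hv ih => rw [hf v hv, (hs _ _ ih).2 v (mem_children_par hv)]
  refine isom_of_bijOn_children hroot fun v => (hs v (f v) (hcode v)).1.congr fun w hw => ?_
  obtain ⟨hwr, rfl⟩ := mem_children.mp hw
  exact (hf w hwr).symm

theorem eq_sum_of_eq_add_sum_children {M : Type*} [AddCancelCommMonoid M] {F ε : V → M}
    (h : ∀ v, F v = ε v + ∑ w ∈ P.children v, F w) : F P.root = ∑ v, ε v := by
  classical
  have hfiber : ∑ v, ∑ w ∈ P.children v, F w = ∑ w ∈ Finset.univ.erase P.root, F w := by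
    rw [← Finset.sum_fiberwise_of_maps_to (s := Finset.univ.erase P.root) (g := P.par)
      (t := Finset.univ) (fun _ _ => Finset.mem_univ _)]
    refine Finset.sum_congr rfl fun v _ => Finset.sum_congr ?_ fun _ _ => rfl
    ext w
    simp [mem_children]
  have hsum : ∑ v, F v = ∑ v, ε v + ∑ w ∈ Finset.univ.erase P.root, F w := by
    rw [← hfiber, ← Finset.sum_add_distrib]
    exact Finset.sum_congr rfl fun v _ => h v
  rw [← Finset.add_sum_erase _ _ (Finset.mem_univ P.root)] at hsum
  exact add_right_cancel hsum

theorem verts_code (P : ParentTree V) : verts P.code = Nat.card V := by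
  rw [code, eq_sum_of_eq_add_sum_children (F := fun v => verts (P.codeAt v)) (ε := fun _ => 1)]
  · simp
  · intro v
    rw [verts_eq, kids_codeAt, Multiset.map_map]
    rfl

theorem mem_leaves_iff_children_eq_empty [Nontrivial V] : v ∈ P.leaves ↔ P.children v = ∅ := by
  simp only [leaves, Set.mem_compl_iff, Set.mem_range, not_exists,
    Finset.eq_empty_iff_forall_notMem]
  refine ⟨fun h w hw => h w (mem_children.mp hw).2, fun h w hw => ?_⟩
  by_cases hwr : w = P.root
  · obtain rfl : P.root = v := by rw [← hw, hwr, P.par_root]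
    obtain ⟨x, hx⟩ := exists_ne P.root
    induction x using P.induction_par with
    | root => exact hx rfl
    | step x hxr ih =>
      by_cases hpar : P.par x = P.root
      · exact h x (mem_children.mpr ⟨hxr, hpar⟩)
      · exact ih hpar
  · exact h w (mem_children.mpr ⟨hwr, hw⟩)

theorem tips_code [Nontrivial V] (P : ParentTree V) : tips P.code = P.leaves.ncard := by
  classical
  have hleaf (v : V) : P.codeAt v = 0 ↔ v ∈ P.leaves := by
    rw [← kids_eq_zero_iff, kids_codeAt, Multiset.map_eq_zero, Finset.val_eq_zero,
      mem_leaves_iff_children_eq_empty]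
  rw [code, eq_sum_of_eq_add_sum_children (F := fun v => tips (P.codeAt v))
    (ε := fun v => if v ∈ P.leaves then 1 else 0)]
  · rw [Finset.sum_boole, Nat.cast_id, ← Set.ncard_coe_finset, Finset.coe_filter_univ]
    rfl
  · intro v
    by_cases hv : v ∈ P.leaves
    · simp [hv, (hleaf v).mpr hv, tips_zero, mem_leaves_iff_children_eq_empty.mp hv]
    · rw [tips_of_ne_zero (mt (hleaf v).mp hv), if_neg hv, zero_add, kids_codeAt,
        Multiset.map_map]
      rfl

end Coding

section Realisation

open scoped Classical in
/-- The tree whose principal subtrees are given; its root is `none`. -/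
noncomputable def join {ι : Type*} {V : ι → Type*} (P : ∀ i, ParentTree (V i)) :
    ParentTree (Option (Σ i, V i)) where
  root := none
  par x := x.bind fun v =>
    if v.2 = (P v.1).root then none else some ⟨v.1, (P v.1).par v.2⟩
  par_root := rfl
  exists_iterate_par_eq_root := by
    rintro (_ | ⟨i, v⟩)
    · exact ⟨0, rfl⟩
    · induction v using (P i).induction_par with
      | root => exact ⟨1, by simp⟩
      | step v hv ih =>
        obtain ⟨k, hk⟩ := ih
        exact ⟨k + 1, by simpa [hv] using hk⟩

theorem code_join {ι : Type*} [Fintype ι] {V : ι → Type*} [∀ i, Fintype (V i)]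
    (P : ∀ i, ParentTree (V i)) :
    kids (join P).code = Finset.univ.val.map fun i => (P i).code := by
  have hnone : (join P).children none =
      Finset.univ.map ⟨fun i => some ⟨i, (P i).root⟩,
        fun i j h => (Sigma.mk.inj (Option.some.inj h)).1⟩ := by
    ext (_ | ⟨i, v⟩)
    · simp [mem_children, join]
    · rw [mem_children, Finset.mem_map]
      constructor
      · rintro ⟨-, h⟩
        obtain rfl : v = (P i).root := by simpa [join] using h
        exact ⟨i, Finset.mem_univ i, rfl⟩
      · rintro ⟨j, -, h⟩
        cases h
        simp [join]
  have hsome (i : ι) (v : V i) : (join P).children (some ⟨i, v⟩) =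
      ((P i).children v).map ⟨fun w => some ⟨i, w⟩, fun w w' h => by simpa using h⟩ := by
    ext (_ | ⟨j, w⟩)
    · simp [mem_children, join]
    · simp only [mem_children, join, Finset.mem_map]
      constructor
      · rintro ⟨-, h⟩
        by_cases hw : w = (P j).root
        · simp [hw] at h
        · simp only [Option.bind_some, hw, if_false, Option.some.injEq] at h
          cases h
          exact ⟨w, ⟨hw, rfl⟩, rfl⟩
      · rintro ⟨w, ⟨hw, rfl⟩, h⟩
        cases h
        simp [hw]
  rw [code_eq (g := fun x => x.elim (kids.symm (Finset.univ.val.map fun i => (P i).code))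
    fun v => (P v.1).codeAt v.2)]
  · exact kids.apply_symm_apply _
  · rintro (_ | ⟨i, v⟩)
    · rw [hnone, Finset.map_val, Multiset.map_map]
      exact kids.apply_symm_apply _
    · rw [hsome, Finset.map_val, Multiset.map_map]
      exact (P i).kids_codeAt v

theorem exists_code_eq (c : ℕ) : ∃ (V : Type) (_ : Fintype V) (P : ParentTree V), P.code = c := by
  induction c using Nat.strong_induction_on with
  | _ c ih =>
    have hkid (k : (kids c).ToType) :
        ∃ (V : Type) (_ : Fintype V) (P : ParentTree V), P.code = k.1 :=
      ih k.1 (lt_of_mem_kids (Multiset.coe_mem))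
    choose V _ P hP using hkid
    refine ⟨_, inferInstance, join P, kids.injective ?_⟩
    simp only [code_join, hP]
    exact Multiset.map_univ_coe _

variable {V W : Type*}

/-- Relabel the vertices of a rooted tree. -/
def relabel (P : ParentTree V) (e : V ≃ W) : ParentTree W where
  root := e P.root
  par := e ∘ P.par ∘ e.symm
  par_root := by simp [P.par_root]
  exists_iterate_par_eq_root w := by
    obtain ⟨v, rfl⟩ := e.surjective w
    obtain ⟨k, hk⟩ := P.exists_iterate_par_eq_root v
    have hconj : Function.Semiconj e P.par (e ∘ P.par ∘ e.symm) := fun v => by simp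
    exact ⟨k, by rw [← (hconj.iterate_right k).eq, hk]⟩

theorem isom_relabel (P : ParentTree V) (e : V ≃ W) : P.Isom (P.relabel e) :=
  ⟨e, rfl, fun v => by simp [relabel]⟩

theorem exists_code_eq_of_verts_eq {c n : ℕ} (hc : verts c = n) :
    ∃ P : ParentTree (Fin n), P.code = c := by
  obtain ⟨V, _, P, rfl⟩ := exists_code_eq c
  rw [verts_code, Nat.card_eq_fintype_card] at hc
  exact ⟨P.relabel (Fintype.equivFinOfCardEq hc), (P.isom_relabel _).code_eq.symm⟩

end Realisation

end ParentTree

/-! ### The generating function of rooted trees -/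

namespace Matula

variable {w : ℕ → ℝ}

/-- The completely multiplicative function taking the value `w k` at the `k`-th prime. -/
noncomputable def primeWeight (w : ℕ → ℝ) : ℕ →* ℝ where
  toFun n := if n = 0 then 0 else (n.primeFactorsList.map fun p => w (Nat.count Nat.Prime p)).prod
  map_one' := by simp
  map_mul' a b := by
    by_cases ha : a = 0
    · simp [ha]
    by_cases hb : b = 0
    · simp [hb]
    rw [if_neg (mul_ne_zero ha hb), if_neg ha, if_neg hb, ← List.prod_append, ← List.map_append]
    exact ((Nat.perm_primeFactorsList_mul ha hb).map _).prod_eq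

theorem primeWeight_succ (w : ℕ → ℝ) (c : ℕ) :
    primeWeight w (c + 1) = ((kids c).map w).prod := by
  simp [primeWeight, kids, Function.comp_def]

theorem primeWeight_nth_prime (w : ℕ → ℝ) (k : ℕ) :
    primeWeight w (Nat.nth Nat.Prime k) = w k := by
  have hp := Nat.prime_nth_prime k
  simp [primeWeight, hp.ne_zero, Nat.primeFactorsList_prime hp,
    Nat.count_nth_of_infinite Nat.infinite_setOfPred_prime]

theorem primeWeight_nonneg (hw : ∀ k, 0 ≤ w k) (n : ℕ) : 0 ≤ primeWeight w n := by
  cases n with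
  | zero => simp [primeWeight]
  | succ c =>
    rw [primeWeight_succ]
    exact Multiset.prod_nonneg fun a ha => by
      obtain ⟨k, -, rfl⟩ := Multiset.mem_map.mp ha
      exact hw k

theorem prod_primeWeight (w : ℕ → ℝ) (N : ℕ) :
    ∏ p ∈ (Finset.range N).image (Nat.nth Nat.Prime) with p.Prime, (1 - primeWeight w p)⁻¹ =
      ∏ k ∈ Finset.range N, (1 - w k)⁻¹ := by
  have hprime : ∀ p ∈ (Finset.range N).image (Nat.nth Nat.Prime), p.Prime := by
    simp only [Finset.mem_image]
    rintro _ ⟨k, -, rfl⟩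
    exact Nat.prime_nth_prime k
  rw [Finset.filter_true_of_mem hprime,
    Finset.prod_image (Nat.nth_injective Nat.infinite_setOfPred_prime).injOn]
  simp only [primeWeight_nth_prime]

theorem succ_mem_factoredNumbers {c N : ℕ} (hc : c < N + 1) :
    c + 1 ∈ Nat.factoredNumbers ((Finset.range N).image (Nat.nth Nat.Prime)) := by
  refine Nat.mem_factoredNumbers_iff_forall_le.mpr ⟨c.succ_ne_zero, fun p hpc hp _ => ?_⟩
  have hnth := Nat.nth_count hp
  have := Nat.add_two_le_nth_prime (Nat.count Nat.Prime p)
  exact Finset.mem_image.mpr ⟨_, Finset.mem_range.mpr (by omega), hnth⟩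

theorem sum_prod_kids_le (hw : ∀ k, 0 ≤ w k) (hw1 : ∀ k, w k < 1) (N : ℕ) :
    ∑ c ∈ Finset.range (N + 1), ((kids c).map w).prod ≤ ∏ k ∈ Finset.range N, (1 - w k)⁻¹ := by
  have hlt {p : ℕ} (hp : p.Prime) : ‖primeWeight w p‖ < 1 := by
    rw [← Nat.nth_count hp, primeWeight_nth_prime, Real.norm_of_nonneg (hw _)]
    exact hw1 _
  have hsum := (EulerProduct.summable_and_hasSum_factoredNumbers_prod_filter_prime_geometric hlt
    ((Finset.range N).image (Nat.nth Nat.Prime))).2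
  rw [prod_primeWeight] at hsum
  refine le_trans (le_of_eq ?_) (sum_le_hasSum ((Finset.range (N + 1)).map (addRightEmbedding 1))
    (fun n _ => Set.indicator_nonneg (fun n _ => primeWeight_nonneg hw n) n)
    (hasSum_subtype_iff_indicator.mp hsum))
  rw [Finset.sum_map]
  refine Finset.sum_congr rfl fun c hc => ?_
  rw [addRightEmbedding_apply,
    Set.indicator_of_mem (succ_mem_factoredNumbers (Finset.mem_range.mp hc)), primeWeight_succ]

theorem prod_inv_one_sub_le_tsum (hw : ∀ k, 0 ≤ w k) (hs : Summable fun c => ((kids c).map w).prod)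
    (N : ℕ) : ∏ k ∈ Finset.range N, (1 - w k)⁻¹ ≤ ∑' c, ((kids c).map w).prod := by
  have hsum : Summable (primeWeight w) :=
    (summable_nat_add_iff 1).mp (by simpa only [primeWeight_succ] using hs)
  have hzero : primeWeight w 0 = 0 := by simp [primeWeight]
  rw [← prod_primeWeight,
    EulerProduct.prod_filter_prime_geometric_eq_tsum_factoredNumbers hsum]
  calc _ ≤ ∑' n, primeWeight w n := hsum.tsum_subtype_le _ _ (primeWeight_nonneg hw)
    _ = _ := by simp only [hsum.tsum_eq_zero_add, hzero, zero_add, primeWeight_succ]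

end Matula

theorem inv_one_sub_le_exp {x q : ℝ} (hx : 0 ≤ x) (hxq : x ≤ q) (hq : q < 1) :
    (1 - x)⁻¹ ≤ Real.exp ((1 - q)⁻¹ * x) := by
  have hx1 : 1 - x ≠ 0 := by linarith
  calc (1 - x)⁻¹ = (1 - x)⁻¹ * x + 1 := by field_simp; ring
    _ ≤ (1 - q)⁻¹ * x + 1 := by
      gcongr
    _ ≤ Real.exp ((1 - q)⁻¹ * x) := Real.add_one_le_exp _

namespace Matula

variable {z u : ℝ} {c : ℕ}

/-- The term of the generating function of rooted trees, with `z` marking vertices and `u` marking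
tips, that belongs to the tree coded by `c`. -/
noncomputable def weight (z u : ℝ) (c : ℕ) : ℝ := z ^ verts c * u ^ tips c

theorem weight_zero (z u : ℝ) : weight z u 0 = z * u := by
  rw [weight, verts_zero, tips_zero, pow_one, pow_one]

theorem weight_one (z u : ℝ) : weight z u 1 = z ^ 2 * u := by
  rw [weight, verts_one, tips_one, pow_one]

theorem prod_map_weight (z u : ℝ) (M : Multiset ℕ) :
    (M.map (weight z u)).prod = z ^ (M.map verts).sum * u ^ (M.map tips).sum := by
  induction M using Multiset.induction with
  | empty => simp
  | cons c M ih =>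
    simp only [Multiset.map_cons, Multiset.prod_cons, Multiset.sum_cons, ih, weight, pow_add]
    ring

theorem weight_eq (z u : ℝ) (c : ℕ) :
    weight z u c = z * ((kids c).map (weight z u)).prod + if c = 0 then z * (u - 1) else 0 := by
  split_ifs with hc
  · rw [hc, weight_zero, kids_zero, Multiset.map_zero, Multiset.prod_zero]
    ring
  · rw [prod_map_weight, weight, verts_eq, tips_of_ne_zero hc, pow_add]
    ring

theorem weight_nonneg (hz : 0 ≤ z) (hu : 0 ≤ u) (c : ℕ) : 0 ≤ weight z u c :=
  mul_nonneg (pow_nonneg hz _) (pow_nonneg hu _)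

theorem pow_mul_lt_one (hz : 0 ≤ z) (hz1 : z < 1) (hu1 : u ≤ 1) {k : ℕ} (hk : k ≠ 0) :
    z ^ k * u < 1 :=
  (mul_le_of_le_one_right (pow_nonneg hz k) hu1).trans_lt (pow_lt_one₀ hz hz1 hk)

theorem weight_lt_one (hz : 0 ≤ z) (hz1 : z < 1) (hu : 0 ≤ u) (hu1 : u ≤ 1) (c : ℕ) :
    weight z u c < 1 :=
  pow_mul_lt_one hz hz1 (pow_le_one₀ hu hu1) (by have := verts_pos c; omega)

theorem weight_le (hz : 0 ≤ z) (hz1 : z ≤ 1) (hu : 0 ≤ u) (hu1 : u ≤ 1) (hc0 : c ≠ 0)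
    (hc1 : c ≠ 1) : weight z u c ≤ z ^ 3 * u :=
  mul_le_mul (pow_le_pow_of_le_one hz hz1 (three_le_verts hc0 hc1))
    (pow_le_of_le_one hu hu1 (by have := tips_pos c; omega)) (pow_nonneg hu _) (pow_nonneg hz _)

theorem prod_inv_one_sub_weight_le (hz : 0 ≤ z) (hz1 : z < 1) (hu : 0 ≤ u) (hu1 : u ≤ 1) (N : ℕ) :
    ∏ c ∈ Finset.range (N + 2), (1 - weight z u c)⁻¹ ≤
      Real.exp ((1 - z ^ 3 * u)⁻¹ * (∑ c ∈ Finset.range (N + 2), weight z u c - z * u - z ^ 2 * u))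
        * (1 - z ^ 2 * u)⁻¹ * (1 - z * u)⁻¹ := by
  have hinv (c : ℕ) : 0 ≤ (1 - weight z u c)⁻¹ :=
    inv_nonneg.mpr (sub_pos.mpr (weight_lt_one hz hz1 hu hu1 c)).le
  rw [Finset.prod_range_succ', Finset.prod_range_succ', Finset.sum_range_succ',
    Finset.sum_range_succ', zero_add, ← weight_zero z u, ← weight_one z u,
    add_sub_cancel_right, add_sub_cancel_right, Finset.mul_sum, Real.exp_sum]
  gcongr with c
  · exact hinv 0
  · exact hinv 1
  · exact fun c _ => hinv _
  · exact inv_one_sub_le_exp (weight_nonneg hz hu _)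
      (weight_le hz hz1.le hu hu1 (by omega) (by omega)) (pow_mul_lt_one hz hz1 hu1 three_ne_zero)

theorem le_prod_inv_one_sub_weight (hz : 0 ≤ z) (hz1 : z < 1) (hu : 0 ≤ u) (hu1 : u ≤ 1) (N : ℕ) :
    Real.exp (∑ c ∈ Finset.range (N + 2), weight z u c - z * u - z ^ 2 * u) * (1 - z ^ 2 * u)⁻¹ *
        (1 - z * u)⁻¹ ≤
      ∏ c ∈ Finset.range (N + 2), (1 - weight z u c)⁻¹ := by
  have hinv (c : ℕ) : 0 ≤ (1 - weight z u c)⁻¹ :=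
    inv_nonneg.mpr (sub_pos.mpr (weight_lt_one hz hz1 hu hu1 c)).le
  rw [Finset.prod_range_succ', Finset.prod_range_succ', Finset.sum_range_succ',
    Finset.sum_range_succ', zero_add, ← weight_zero z u, ← weight_one z u,
    add_sub_cancel_right, add_sub_cancel_right, Real.exp_sum]
  gcongr with c
  · exact hinv 0
  · exact hinv 1
  · rw [← one_div]
    exact Real.exp_bound_div_one_sub_of_interval (weight_nonneg hz hu _)
      (weight_lt_one hz hz1 hu hu1 _)

theorem sum_weight_le_of_le {S : ℝ} (hz : 0 ≤ z) (hz1 : z < 1) (hu : 0 ≤ u) (hu1 : u ≤ 1)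
    (hbase : z ^ 2 * u + z * u ≤ S)
    (hstep : z * (Real.exp ((1 - z ^ 3 * u)⁻¹ * (S - z * u - z ^ 2 * u)) * (1 - z ^ 2 * u)⁻¹ *
      (1 - z * u)⁻¹) + z * (u - 1) ≤ S) (N : ℕ) :
    ∑ c ∈ Finset.range N, weight z u c ≤ S := by
  have hnonneg := weight_nonneg hz hu
  have hinv (c : ℕ) : 0 ≤ (1 - weight z u c)⁻¹ :=
    inv_nonneg.mpr (sub_pos.mpr (weight_lt_one hz hz1 hu hu1 c)).le
  suffices h : ∀ M, ∑ c ∈ Finset.range (M + 2), weight z u c ≤ S from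
    (Finset.sum_le_sum_of_subset_of_nonneg (Finset.range_mono (by omega))
      fun c _ _ => hnonneg c).trans (h N)
  intro M
  induction M with
  | zero =>
    rw [Finset.sum_range_succ, Finset.sum_range_one, weight_zero, weight_one]
    linarith
  | succ M ih =>
    calc ∑ c ∈ Finset.range (M + 3), weight z u c
        = z * ∑ c ∈ Finset.range (M + 3), ((kids c).map (weight z u)).prod + z * (u - 1) := by
          rw [Finset.sum_congr rfl fun c _ => weight_eq z u c, Finset.sum_add_distrib,
            ← Finset.mul_sum, Finset.sum_ite_eq', if_pos (by simp)]
      _ ≤ z * ∏ c ∈ Finset.range (M + 2), (1 - weight z u c)⁻¹ + z * (u - 1) := by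
          gcongr
          exact sum_prod_kids_le hnonneg (weight_lt_one hz hz1 hu hu1) (M + 2)
      _ ≤ z * (Real.exp ((1 - z ^ 3 * u)⁻¹ * (S - z * u - z ^ 2 * u)) * (1 - z ^ 2 * u)⁻¹ *
            (1 - z * u)⁻¹) + z * (u - 1) := by
          gcongr
          refine (prod_inv_one_sub_weight_le hz hz1 hu hu1 M).trans ?_
          gcongr
          · simpa only [weight_zero] using hinv 0
          · simpa only [weight_one] using hinv 1
          · exact inv_nonneg.mpr (sub_pos.mpr (pow_mul_lt_one hz hz1 hu1 three_ne_zero)).le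
      _ ≤ S := hstep

/-- The point is chosen so that the bound `(429 / 1000 * (4 / 5))⁻¹` on the growth of the number of
trees with few leaves is below the growth rate `2.955…` of all rooted trees. -/
theorem sum_weight_le (N : ℕ) :
    ∑ c ∈ Finset.range N, weight (429 / 1000) ((4 / 5) ^ 3) c ≤ 3 / 4 := by
  refine sum_weight_le_of_le (by norm_num) (by norm_num) (by norm_num) (by norm_num) (by norm_num)
    ?_ N
  have hexp : Real.exp ((1 - (429 / 1000) ^ 3 * (4 / 5) ^ 3)⁻¹ *
      (3 / 4 - 429 / 1000 * (4 / 5) ^ 3 - (429 / 1000) ^ 2 * (4 / 5) ^ 3)) ≤ 1576 / 1000 := by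
    refine (Real.exp_le_exp.mpr (show _ ≤ (4546 / 10000 : ℝ) by norm_num)).trans
      ((Real.exp_bound' (n := 6) (by norm_num) (by norm_num) (by norm_num)).trans ?_)
    norm_num [Finset.sum_range_succ, Nat.factorial]
  refine le_trans (by gcongr) (show 429 / 1000 * (1576 / 1000 *
    (1 - (429 / 1000 : ℝ) ^ 2 * (4 / 5) ^ 3)⁻¹ * (1 - 429 / 1000 * (4 / 5) ^ 3)⁻¹) +
      429 / 1000 * ((4 / 5) ^ 3 - 1) ≤ 3 / 4 by norm_num)

theorem card_mul_pow_le {v S : ℝ} (hz : 0 ≤ z) (hv : 0 ≤ v) (hv1 : v ≤ 1)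
    (hS : ∀ N, ∑ c ∈ Finset.range N, weight z (v ^ 3) c ≤ S) {n : ℕ} (F : Finset ℕ)
    (hverts : ∀ c ∈ F, verts c = n) (htips : ∀ c ∈ F, 3 * tips c ≤ n) :
    F.card * (z * v) ^ n ≤ S :=
  calc F.card * (z * v) ^ n ≤ ∑ c ∈ F, weight z (v ^ 3) c := by
        rw [← nsmul_eq_mul]
        refine Finset.card_nsmul_le_sum _ _ _ fun c hc => ?_
        rw [weight, hverts c hc, mul_pow, ← pow_mul]
        exact mul_le_mul_of_nonneg_left (pow_le_pow_of_le_one hv hv1 (htips c hc))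
          (pow_nonneg hz n)
    _ ≤ ∑ c ∈ Finset.range (F.sup id + 1), weight z (v ^ 3) c :=
        Finset.sum_le_sum_of_subset_of_nonneg
          (fun c hc => Finset.mem_range_succ_iff.mpr (Finset.le_sup (f := id) hc))
          fun c _ _ => weight_nonneg hz (pow_nonneg hv 3) c
    _ ≤ S := hS _

theorem not_summable_pow_verts_of_lt (hz : 0 < z) (hz1 : z < 1)
    (h : (1 - z) * (1 - z ^ 2) < z * Real.exp (1 - z - z ^ 2)) :
    ¬ Summable fun c => z ^ verts c := by
  intro hs
  have hweight : weight z 1 = fun c => z ^ verts c := funext fun c => by simp [weight]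
  rw [← hweight] at hs
  have hnonneg : ∀ c, 0 ≤ weight z 1 c := weight_nonneg hz.le zero_le_one
  have hkids (c : ℕ) : ((kids c).map (weight z 1)).prod = z⁻¹ * weight z 1 c := by
    rw [weight_eq z 1 c, sub_self, mul_zero, ite_self, add_zero, inv_mul_cancel_left₀ hz.ne']
  have hskids : Summable fun c => ((kids c).map (weight z 1)).prod := by
    simpa only [hkids] using hs.mul_left z⁻¹
  set T := ∑' c, weight z 1 c
  have hTpos : 0 < T := hs.tsum_pos hnonneg 0 (by rw [weight_zero]; linarith)
  have hbound (N : ℕ) : Real.exp (∑ c ∈ Finset.range (N + 2), weight z 1 c - z - z ^ 2) *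
      (1 - z ^ 2)⁻¹ * (1 - z)⁻¹ ≤ z⁻¹ * T := by
    have := (le_prod_inv_one_sub_weight hz.le hz1 zero_le_one le_rfl N).trans
      (prod_inv_one_sub_le_tsum hnonneg hskids (N + 2))
    simpa only [hkids, tsum_mul_left, mul_one] using this
  have hlim : Real.exp (T - z - z ^ 2) * (1 - z ^ 2)⁻¹ * (1 - z)⁻¹ ≤ z⁻¹ * T := by
    have hpartial := hs.hasSum.tendsto_sum_nat.comp (Filter.tendsto_add_atTop_nat 2)
    exact le_of_tendsto' ((((Real.continuous_exp.tendsto _).comp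
      ((hpartial.sub_const z).sub_const (z ^ 2))).mul_const _).mul_const _) hbound
  have hexp : T * Real.exp (1 - z - z ^ 2) ≤ Real.exp (T - z - z ^ 2) := by
    rw [show T - z - z ^ 2 = (T - 1) + (1 - z - z ^ 2) by ring, Real.exp_add]
    gcongr
    linarith [Real.add_one_le_exp (T - 1)]
  have hz2 : 0 < 1 - z ^ 2 := by nlinarith
  have hz' : 0 < 1 - z := by linarith
  rw [← div_eq_mul_inv, ← div_eq_mul_inv, div_div, div_le_iff₀ (by positivity)] at hlim
  have : z * (T * Real.exp (1 - z - z ^ 2)) ≤ T * ((1 - z ^ 2) * (1 - z)) := by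
    calc _ ≤ z * (z⁻¹ * T * ((1 - z ^ 2) * (1 - z))) :=
          mul_le_mul_of_nonneg_left (hexp.trans hlim) hz.le
      _ = _ := by field_simp
  nlinarith

/-- The radius of convergence is `0.3383…`. -/
theorem not_summable_pow_verts : ¬ Summable fun c => (679 / 2000 : ℝ) ^ verts c := by
  refine not_summable_pow_verts_of_lt (by norm_num) (by norm_num) ?_
  have hexp : (1724 / 1000 : ℝ) ≤ Real.exp (1 - 679 / 2000 - (679 / 2000) ^ 2) := by
    refine le_trans ?_ (Real.sum_le_exp_of_nonneg (by norm_num) 6)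
    norm_num [Finset.sum_range_succ, Nat.factorial]
  linarith

end Matula

/-! ### Counting trees -/

instance (n : ℕ) : Finite (UnlabelledTree n) :=
  have : Finite (TreeOn n) := Subtype.finite
  Quotient.finite _

instance (n : ℕ) : Nonempty (UnlabelledTree n) :=
  have ⟨T, _, hT⟩ := (SimpleGraph.connected_top (V := Fin (n + 1))).exists_isTree_le
  ⟨Quotient.mk (treeSetoid n) ⟨T, hT⟩⟩

/-- The isomorphism class of the graph underlying a rooted tree. -/
def ParentTree.unlabelled {n : ℕ} (P : ParentTree (Fin (n + 1))) : UnlabelledTree n :=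
  Quotient.mk (treeSetoid n) ⟨P.graph, P.graph_isTree⟩

theorem ParentTree.unlabelled_eq_of_code_eq {n : ℕ} {P Q : ParentTree (Fin (n + 1))}
    (h : P.code = Q.code) : P.unlabelled = Q.unlabelled :=
  Quotient.sound (s := treeSetoid n) (isom_of_code_eq h).graph_iso

theorem UnlabelledTree.exists_unlabelled_eq {n : ℕ} (q : UnlabelledTree n) :
    ∃ P : ParentTree (Fin (n + 1)), P.unlabelled = q := by
  induction q using Quotient.inductionOn with
  | _ T =>
    obtain ⟨P, -, hP⟩ := ParentTree.exists_root_eq_graph_eq T.2 0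
    exact ⟨P, congrArg (Quotient.mk (treeSetoid n)) (Subtype.ext hP)⟩

namespace Matula

theorem exists_surjective_code (n : ℕ) :
    ∃ f : UnlabelledTree n × Fin (n + 1) → {c // verts c = n + 1}, Function.Surjective f := by
  choose rooted hroot hgraph using fun (q : UnlabelledTree n) (r : Fin (n + 1)) =>
    ParentTree.exists_root_eq_graph_eq (q.out : TreeOn n).2 r
  refine ⟨fun x => ⟨(rooted x.1 x.2).code, by rw [ParentTree.verts_code, Nat.card_fin]⟩, ?_⟩
  rintro ⟨c, hc⟩
  obtain ⟨P, rfl⟩ := ParentTree.exists_code_eq_of_verts_eq hc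
  obtain ⟨e⟩ : Nonempty (P.graph ≃g (P.unlabelled.out : TreeOn n).val) :=
    Quotient.exact (s := treeSetoid n) (Quotient.out_eq P.unlabelled).symm
  refine ⟨(P.unlabelled, e P.root), Subtype.ext (ParentTree.Isom.code_eq ?_).symm⟩
  have isom_of_iso {G : SimpleGraph (Fin (n + 1))} (e : P.graph ≃g G)
      {Q : ParentTree (Fin (n + 1))} (hQ : Q.graph = G) (hroot : Q.root = e P.root) :
      P.Isom Q := by
    subst hQ
    exact ParentTree.isom_of_graph_iso e hroot.symm
  exact isom_of_iso e (hgraph _ _) (hroot _ _)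

instance (n : ℕ) : Finite {c // verts c = n} := by
  cases n with
  | zero =>
    have : IsEmpty {c // verts c = 0} := ⟨fun c => (Nat.ne_of_gt (verts_pos c.1)) c.2⟩
    infer_instance
  | succ n =>
    obtain ⟨f, hf⟩ := exists_surjective_code n
    exact Finite.of_surjective f hf

/-- The number of rooted trees with `n` vertices, counted through their codes. -/
noncomputable def numRooted (n : ℕ) : ℕ := Nat.card {c // verts c = n}

theorem numRooted_succ_le (n : ℕ) :
    numRooted (n + 1) ≤ Nat.card (UnlabelledTree n) * (n + 1) := by
  obtain ⟨f, hf⟩ := exists_surjective_code n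
  simpa [numRooted] using Nat.card_le_card_of_surjective f hf

theorem verts_kids_symm (M : Multiset ℕ) : verts (kids.symm M) = 1 + (M.map verts).sum := by
  rw [verts_eq, kids.apply_symm_apply]

theorem numRooted_pos {n : ℕ} (hn : 1 ≤ n) : 0 < numRooted n := by
  have : Nonempty {c // verts c = n} := by
    induction n, hn using Nat.le_induction with
    | base => exact ⟨⟨0, verts_zero⟩⟩
    | succ n _ ih =>
      obtain ⟨c, hc⟩ := ih
      exact ⟨⟨kids.symm {c}, by simp [verts_kids_symm, hc, add_comm]⟩⟩
  exact Nat.card_pos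

theorem numRooted_mul_le {N n : ℕ} (h : n ≠ N) :
    numRooted N * numRooted n ≤ numRooted (n + (N + 1)) := by
  rw [numRooted, numRooted, ← Nat.card_prod]
  refine Nat.card_le_card_of_injective
    (fun p => ⟨kids.symm {p.1.1, p.2.1}, by simp [verts_kids_symm, p.1.2, p.2.2]; omega⟩) ?_
  rintro ⟨⟨a, ha⟩, ⟨b, hb⟩⟩ ⟨⟨a', ha'⟩, ⟨b', hb'⟩⟩ hab
  have hpair : ({a, b} : Multiset ℕ) = {a', b'} := by simpa using hab
  obtain rfl : a = a' := by
    have hmem : a ∈ ({a', b'} : Multiset ℕ) := hpair ▸ Multiset.mem_cons_self a {b}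
    refine (Multiset.mem_cons.mp hmem).resolve_right fun hab' => h ?_
    rw [← hb', ← ha, Multiset.mem_singleton.mp hab']
  obtain rfl : b = b' := by simpa using hpair
  rfl

theorem summable_pow_verts {β z : ℝ} (hz : 0 ≤ z) (hβ : 0 ≤ β) (hzβ : z * β < 1)
    (h : ∀ n, (numRooted n : ℝ) ≤ β ^ (n + 1)) : Summable fun c => z ^ verts c := by
  have hfiber (n : ℕ) (c : {c // verts c = n}) : z ^ verts c.1 = z ^ n := by rw [c.2]
  rw [← (Equiv.sigmaFiberEquiv verts).summable_iff,
    summable_sigma_of_nonneg (f := (fun c => z ^ verts c) ∘ Equiv.sigmaFiberEquiv verts)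
      fun x => pow_nonneg hz _]
  refine ⟨fun n => Summable.of_finite, ?_⟩
  simp only [Function.comp_apply, Equiv.sigmaFiberEquiv_apply, hfiber, tsum_const, nsmul_eq_mul]
  refine .of_nonneg_of_le (fun n => by positivity) (fun n => ?_)
    ((summable_geometric_of_lt_one (mul_nonneg hz hβ) hzβ).mul_left β)
  calc (numRooted n : ℝ) * z ^ n ≤ β ^ (n + 1) * z ^ n := by gcongr; exact h n
    _ = β * (z * β) ^ n := by ring

theorem exists_pow_le_numRooted : ∃ N, (147 / 50 : ℝ) ^ (N + 1) ≤ numRooted N := by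
  by_contra! h
  exact not_summable_pow_verts
    (summable_pow_verts (by norm_num) (by norm_num) (by norm_num) fun n => (h n).le)

theorem exists_mul_pow_le_numRooted {β : ℝ} (hβ : 1 ≤ β) {N : ℕ}
    (hN : β ^ (N + 1) ≤ numRooted N) :
    ∃ a : ℝ, 0 < a ∧ ∀ᶠ n in Filter.atTop, a * β ^ n ≤ numRooted n := by
  refine ⟨(β ^ (2 * N + 1))⁻¹, by positivity, ?_⟩
  filter_upwards [Filter.eventually_gt_atTop N] with n hn
  induction n using Nat.strong_induction_on with
  | _ n ih =>
    by_cases hn' : n ≤ 2 * N + 1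
    · calc (β ^ (2 * N + 1))⁻¹ * β ^ n ≤ 1 := by
            rw [inv_mul_le_one₀ (by positivity)]
            exact pow_le_pow_right₀ hβ hn'
        _ ≤ numRooted n := by exact_mod_cast numRooted_pos (by omega)
    · obtain ⟨k, rfl⟩ : ∃ k, n = k + (N + 1) := ⟨n - (N + 1), by omega⟩
      calc (β ^ (2 * N + 1))⁻¹ * β ^ (k + (N + 1))
          = β ^ (N + 1) * ((β ^ (2 * N + 1))⁻¹ * β ^ k) := by rw [pow_add]; ring
        _ ≤ numRooted N * numRooted k := by
            gcongr
            exact ih k (by omega) (by omega)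
        _ ≤ numRooted (k + (N + 1)) := by exact_mod_cast numRooted_mul_le (by omega)

end Matula

namespace UnlabelledTree

/-- At least a third of the vertices are leaves for some choice of root; the root itself does not
count as a leaf. -/
def IsLeafy {n : ℕ} (q : UnlabelledTree n) : Prop :=
  ∃ P : ParentTree (Fin (n + 1)), P.unlabelled = q ∧ n + 1 ≤ 3 * P.leaves.ncard

theorem card_not_isLeafy_mul_le {n : ℕ} (hn : n ≠ 0) :
    (Nat.card {q : UnlabelledTree n // ¬ q.IsLeafy} : ℝ) * (429 / 1250) ^ (n + 1) ≤ 1 := by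
  classical
  have := Fintype.ofFinite {q : UnlabelledTree n // ¬ q.IsLeafy}
  have : Nontrivial (Fin (n + 1)) := Fin.nontrivial_iff_two_le.mpr (by omega)
  choose P hP using exists_unlabelled_eq (n := n)
  have hinj : Function.Injective fun q : {q : UnlabelledTree n // ¬ q.IsLeafy} => (P q.1).code :=
    fun q r h => Subtype.ext (by
      rw [← hP q.1, ← hP r.1, ParentTree.unlabelled_eq_of_code_eq h])
  have hcard := Matula.card_mul_pow_le (n := n + 1) (by norm_num) (by norm_num) (by norm_num)
    Matula.sum_weight_le (Finset.univ.map ⟨_, hinj⟩) ?_ ?_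
  · rw [Finset.card_map, Finset.card_univ, ← Nat.card_eq_fintype_card] at hcard
    norm_num at hcard ⊢
    linarith
  · simp [ParentTree.verts_code]
  · simp only [Finset.mem_map, Finset.mem_univ, true_and, Function.Embedding.coeFn_mk]
    rintro _ ⟨q, rfl⟩
    rw [ParentTree.tips_code]
    by_contra! h
    exact q.2 ⟨P q.1, hP q.1, h.le⟩

theorem tendsto_card_not_isLeafy_div_card :
    Filter.Tendsto (fun n : ℕ => (Nat.card {q : UnlabelledTree n // ¬ q.IsLeafy} : ℝ) /
      Nat.card (UnlabelledTree n)) Filter.atTop (nhds 0) := by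
  obtain ⟨N, hN⟩ := Matula.exists_pow_le_numRooted
  obtain ⟨a, ha, hlow⟩ := Matula.exists_mul_pow_le_numRooted (by norm_num) hN
  have hshift := Filter.tendsto_add_atTop_nat 1
  have hlim : Filter.Tendsto
      (fun n : ℕ => a⁻¹ * ((n + 1 : ℕ) * ((1250 / 429) / (147 / 50) : ℝ) ^ (n + 1)))
      Filter.atTop (nhds 0) := by
    simpa using ((tendsto_self_mul_const_pow_of_lt_one (r := (1250 / 429) / (147 / 50))
      (by norm_num) (by norm_num)).comp hshift).const_mul a⁻¹
  refine squeeze_zero' (.of_forall fun n => by positivity) ?_ hlim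
  filter_upwards [hshift.eventually hlow, Filter.eventually_ne_atTop 0] with n hn hn0
  have hbad : (Nat.card {q : UnlabelledTree n // ¬ q.IsLeafy} : ℝ) ≤ (1250 / 429) ^ (n + 1) := by
    rw [show (1250 / 429 : ℝ) = (429 / 1250)⁻¹ by norm_num, inv_pow, ← one_div,
      le_div_iff₀ (by positivity)]
    exact card_not_isLeafy_mul_le hn0
  have hall : a * (147 / 50) ^ (n + 1) / (n + 1 : ℕ) ≤ Nat.card (UnlabelledTree n) := by
    rw [div_le_iff₀ (by positivity)]
    exact hn.trans (by exact_mod_cast Matula.numRooted_succ_le n)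
  calc _ ≤ (1250 / 429 : ℝ) ^ (n + 1) / (a * (147 / 50) ^ (n + 1) / (n + 1 : ℕ)) := by gcongr
    _ = _ := by
      rw [div_pow (1250 / 429) (147 / 50), div_div_eq_mul_div]
      generalize (1250 / 429 : ℝ) ^ (n + 1) = x, (147 / 50 : ℝ) ^ (n + 1) = y
      ring

theorem tendsto_card_isLeafy_div_card :
    Filter.Tendsto (fun n : ℕ => (Nat.card {q : UnlabelledTree n // q.IsLeafy} : ℝ) /
      Nat.card (UnlabelledTree n)) Filter.atTop (nhds 1) := by
  classical
  have hcompl := tendsto_card_not_isLeafy_div_card.const_sub 1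
  rw [sub_zero] at hcompl
  refine hcompl.congr fun n => ?_
  have hcard : (Nat.card {q : UnlabelledTree n // q.IsLeafy} : ℝ) +
      Nat.card {q : UnlabelledTree n // ¬ q.IsLeafy} = Nat.card (UnlabelledTree n) := by
    rw [← Nat.cast_add, ← Nat.card_sum, Nat.card_congr (Equiv.sumCompl _)]
  have hpos : (0 : ℝ) < Nat.card (UnlabelledTree n) := by exact_mod_cast Nat.card_pos
  field_simp
  linarith

end UnlabelledTree

/-- As `m → ∞` over integers `m` such that `2m+1` is prime, the proportion of isomorphism
classes of unlabelled trees with `m+1` edges that decompose `K_{6m+5} \ e` (the complete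
graph on `6m+5` vertices minus one edge) tends to `1`. -/
theorem random_tree_decomposes_complete_minus_edge :
    Filter.Tendsto
      (fun m : ℕ =>
        ((Nat.card {c : UnlabelledTree (m + 1) //
            ∃ T : TreeOn (m + 1), Quotient.mk (treeSetoid (m + 1)) T = c ∧
              ∀ a b : Fin (6 * m + 5), a ≠ b →
                Decomposes T.val
                  ((⊤ : SimpleGraph (Fin (6 * m + 5))).deleteEdges {s(a, b)})} : ℝ) /
          (Nat.card (UnlabelledTree (m + 1)) : ℝ)))
      (Filter.atTop ⊓ Filter.principal {m : ℕ | Nat.Prime (2 * m + 1)})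
      (nhds 1) := by
  have hleafy := UnlabelledTree.tendsto_card_isLeafy_div_card.comp (Filter.tendsto_add_atTop_nat 1)
  refine tendsto_of_tendsto_of_tendsto_of_le_of_le' (hleafy.mono_left inf_le_left)
    tendsto_const_nhds ?_ (.of_forall fun m => ?_)
  · rw [Filter.eventually_inf_principal]
    refine .of_forall fun m hp => div_le_div_of_nonneg_right ?_ (Nat.cast_nonneg _)
    refine Nat.cast_le.mpr (Nat.card_mono (Set.toFinite _) ?_)
    rintro _ ⟨P, rfl, hP⟩
    exact ⟨⟨P.graph, P.graph_isTree⟩, rfl, fun a b hab =>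
      ParentTree.decomposes_complete_minus_edge hp (Nat.card_fin _) hP hab⟩
  · exact div_le_one_of_le₀ (Nat.cast_le.mpr (Finite.card_subtype_le _)) (Nat.cast_nonneg _)
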